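/- arXiv:2501.04852 — 3 statements merged into one kernel-verified Lean document; each statement's English description precedes it below -/
import Mathlib

section
/- For each integer a with 2^{s-1} ≤ a ≤ 2^s − 1, the number of tuples (h₀, h₁, …, h_{2^s−a−1}) ∈ F^{2^s−a} satisfying h_ℓ = Σ_{j=0}^{ℓ} h_j · C(a−j, ℓ−j) in F for every 0 ≤ ℓ ≤ 2^s − a − 1 equals (2^m)^{⌈(2^s−a+1)/2⌉}. Consequently, the number of self-dual ideals of 𝓡 of the form ⟨(x+1)^a + u² h(x), u(x+1)^{2^{s-1}}, u²(x+1)^{2^s−a}⟩, where 2^{s-1} ≤ a ≤ 2^s − 1 and h(x) = Σ_{j=0}^{2^s−a−1} h_j (x+1)^j ∈ 𝓚, equals Σ_{a=2^{s-1}}^{2^s−1} (2^m)^{⌈(2^s−a+1)/2⌉}. -/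
noncomputable section

open Polynomial

/-- The finite field `GF(2^m)`. -/
abbrev Fq (m : ℕ) : Type := GaloisField 2 m

/-- The ring `R₃ = F[u]/⟨u³⟩`. -/
abbrev R3 (m : ℕ) : Type := AdjoinRoot (X ^ 3 : (Fq m)[X])

/-- The polynomial `x^{2^s} + 1` over `R₃`. -/
abbrev gR (m s : ℕ) : (R3 m)[X] := X ^ (2 ^ s) + 1

/-- The polynomial `x^{2^s} + 1` over `F`. -/
abbrev gK (m s : ℕ) : (Fq m)[X] := X ^ (2 ^ s) + 1

/-- The ring `𝓡 = R₃[x]/⟨x^{2^s}+1⟩`. -/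
abbrev RR (m s : ℕ) : Type := AdjoinRoot (gR m s)

/-- The ring `𝓚 = F[x]/⟨x^{2^s}+1⟩`. -/
abbrev KK (m s : ℕ) : Type := AdjoinRoot (gK m s)

/-- The element `u` of `R₃`. -/
def uu (m : ℕ) : R3 m := AdjoinRoot.root _

/-- The element `u` of `𝓡`. -/
def uR (m s : ℕ) : RR m s := algebraMap (R3 m) (RR m s) (uu m)

/-- The element `x` of `𝓡`. -/
def xR (m s : ℕ) : RR m s := AdjoinRoot.root _

/-- The element `x` of `𝓚`. -/
def xK (m s : ℕ) : KK m s := AdjoinRoot.root _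

lemma gR_monic (m s : ℕ) : (gR m s).Monic := by
  have h : (gR m s) = X ^ (2 ^ s) + C 1 := by simp [gR]
  rw [h]; exact monic_X_pow_add_C _ (by positivity)

lemma gK_monic (m s : ℕ) : (gK m s).Monic := by
  have h : (gK m s) = X ^ (2 ^ s) + C 1 := by simp [gK]
  rw [h]; exact monic_X_pow_add_C _ (by positivity)

/-- The standard representative (of degree `< 2^s`) of an element of `𝓡`. -/
def repR (m s : ℕ) (c : RR m s) : (R3 m)[X] := AdjoinRoot.modByMonicHom (gR_monic m s) c

/-- The standard representative (of degree `< 2^s`) of an element of `𝓚`. -/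
def repK (m s : ℕ) (c : KK m s) : (Fq m)[X] := AdjoinRoot.modByMonicHom (gK_monic m s) c

/-- The `j`-th coefficient of the standard representative of `c ∈ 𝓡`. -/
def coeffR (m s : ℕ) (c : RR m s) (j : ℕ) : R3 m := (repR m s c).coeff j

/-- The dot product on `𝓡`. -/
def dotR (m s : ℕ) (c d : RR m s) : R3 m :=
  ∑ j ∈ Finset.range (2 ^ s), coeffR m s c j * coeffR m s d j

/-- The dual of a set of codewords. -/
def dualSet (m s : ℕ) (S : Set (RR m s)) : Set (RR m s) :=
  {c | ∀ d ∈ S, dotR m s c d = 0}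

/-- A cyclic code (ideal of `𝓡`) is self-dual if it coincides with its dual. -/
def IsSelfDual (m s : ℕ) (C : Ideal (RR m s)) : Prop :=
  (C : Set (RR m s)) = dualSet m s (C : Set (RR m s))

/-- The annihilator of a set of codewords. -/
def annSet (m s : ℕ) (S : Set (RR m s)) : Set (RR m s) :=
  {c | ∀ d ∈ S, c * d = 0}

/-- The reciprocal `c*(x) = x^{deg c} c(x⁻¹)` of an element of `𝓡`. -/
def recip (m s : ℕ) (c : RR m s) : RR m s :=
  xR m s ^ (repR m s c).natDegree *
    Polynomial.aeval (Ring.inverse (xR m s)) (repR m s c)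

/-- Reduction `R₃ → F` modulo `u`. -/
def epsR3 (m : ℕ) : R3 m →+* Fq m :=
  AdjoinRoot.lift (RingHom.id (Fq m)) 0 (by simp)

lemma xK_pow_add_one (m s : ℕ) : (xK m s) ^ (2 ^ s) + 1 = 0 := by
  have h := AdjoinRoot.eval₂_root (gK m s)
  simpa [gK, xK] using h

lemma xR_pow_add_one (m s : ℕ) : (xR m s) ^ (2 ^ s) + 1 = 0 := by
  have h := AdjoinRoot.eval₂_root (gR m s)
  simpa [gR, xR] using h

/-- Reduction `μ : 𝓡 → 𝓚` modulo `u`. -/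
def muRK (m s : ℕ) : RR m s →+* KK m s :=
  AdjoinRoot.lift ((algebraMap (Fq m) (KK m s)).comp (epsR3 m)) (xK m s) (by
    simp only [gR, eval₂_add, eval₂_pow, eval₂_X, eval₂_one]
    exact xK_pow_add_one m s)

/-- The natural inclusion `𝓚 → 𝓡`. -/
def KtoR (m s : ℕ) : KK m s →+* RR m s :=
  AdjoinRoot.lift ((algebraMap (R3 m) (RR m s)).comp (algebraMap (Fq m) (R3 m))) (xR m s) (by
    simp only [gK, eval₂_add, eval₂_pow, eval₂_X, eval₂_one]
    exact xR_pow_add_one m s)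

/-- The `i`-th torsion code of a set `S ⊆ 𝓡`. -/
def TorSet (m s : ℕ) (S : Set (RR m s)) (i : ℕ) : Set (KK m s) :=
  muRK m s '' {f | (uR m s) ^ i * f ∈ S}

/-- The torsion degree `T_i`: the (unique) `k` with `Tor_i = ⟨(x+1)^k⟩`. -/
def Tdeg (m s : ℕ) (S : Set (RR m s)) (i : ℕ) : ℕ :=
  sInf {k | TorSet m s S i =
    ((Ideal.span {(xK m s + 1) ^ k} : Ideal (KK m s)) : Set (KK m s))}

/-- Substitution `h(x) ↦ h(x⁻¹)` on `𝓚`. -/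
def invSub (m s : ℕ) (h : KK m s) : KK m s :=
  Polynomial.aeval (Ring.inverse (xK m s)) (repK m s h)

/-! Put `y = x + 1`, so that `𝓚 = F[y]/⟨y^(2^s)⟩` is a chain ring and `𝓡 = 𝓚[u]/⟨u³⟩`. The dual of
an ideal is the annihilator of its conjugate under `x ↦ x⁻¹`. Conjugation multiplies `y` by the unit
`x⁻¹`, so the conjugate of `⟨yᵃ + u² h, u y^(2^(s-1)), u² y^(2^s-a)⟩` is the ideal of the same
shape with `h(y)` replaced by `xᵃ h(y / x) = ∑ h_j yʲ (1 + y)^(a-j)`, and passing to the annihilator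
changes only the sign of this element, which is invisible in characteristic two. Hence the ideal is
self-dual if and only if `h(y) ≡ (1 + y)ᵃ h(y / (1 + y))` modulo `y^(2^s-a)`, which is the binomial
system coefficient by coefficient.

The solutions `(h₀, …, h_{N-1})` are counted by peeling off `h₀`: those with `h₀ = 0` are the
solutions for `(a - 1, N - 1)`. If `a` is odd and `2 ≤ N`, the second equation forces `h₀ = 0`; if
`a = 2k`, every value of `h₀` occurs, because in characteristic two `(1 + y)ᵏ` is fixed by
`h(y) ↦ (1 + y)ᵃ h(y / (1 + y))`. -/

section BinomialFixed

variable {R : Type*} [CommRing R]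

/-- The polynomial `(1 + X)ᵃ p(X / (1 + X))`, expanded so that it makes sense without inverting
`1 + X`; this is the intended meaning only when `p.natDegree ≤ a`. -/
def mobiusTwist (a : ℕ) (p : R[X]) : R[X] :=
  p.sum fun j c => C c * (X ^ j * (1 + X) ^ (a - j))

lemma coeff_mobiusTwist (a : ℕ) (p : R[X]) (ℓ : ℕ) :
    (mobiusTwist a p).coeff ℓ =
      ∑ j ∈ Finset.range (ℓ + 1), p.coeff j * ((a - j).choose (ℓ - j) : R) := by
  simp only [mobiusTwist, Polynomial.sum, finsetSum_coeff, coeff_C_mul, coeff_X_pow_mul',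
    coeff_one_add_X_pow, mul_ite, mul_zero, ← Finset.sum_filter]
  refine Finset.sum_subset (fun j hj => ?_) fun j hj hj' => ?_
  · simpa [Nat.lt_succ_iff] using (Finset.mem_filter.1 hj).2
  · have hj0 : p.coeff j = 0 := by
      simpa [Nat.lt_succ_iff.1 (Finset.mem_range.1 hj)] using hj'
    rw [hj0, zero_mul]

lemma aeval_mobiusTwist {A : Type*} [CommRing A] [Algebra R A] {a : ℕ} {p : R[X]}
    (hp : p.natDegree ≤ a) {z w : A} (hw : (1 + z) * w = 1) :
    aeval z (mobiusTwist a p) = (1 + z) ^ a * aeval (z * w) p := by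
  rw [aeval_eq_sum_range (p := p), mobiusTwist, sum_over_range _ (by simp), map_sum,
    Finset.mul_sum]
  refine Finset.sum_congr rfl fun j hj => ?_
  have hja : j ≤ a := (Nat.lt_succ_iff.1 (Finset.mem_range.1 hj)).trans hp
  have hcancel : (1 + z) ^ a * w ^ j = (1 + z) ^ (a - j) := by
    rw [← Nat.sub_add_cancel hja, pow_add, mul_assoc, ← mul_pow, hw, one_pow, mul_one,
      Nat.add_sub_cancel]
  simp only [map_mul, map_pow, map_add, map_one, aeval_C, aeval_X, Algebra.smul_def, ← hcancel]
  ring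

lemma mobiusTwist_one_add_X_pow (k : ℕ) :
    mobiusTwist (2 * k) ((1 + X) ^ k : R[X]) = ((1 + X) * (1 + 2 * X)) ^ k := by
  have hunit : IsUnit (1 + PowerSeries.X : PowerSeries R) := by
    simp [PowerSeries.isUnit_iff_constantCoeff]
  obtain ⟨w, hw⟩ := hunit.exists_right_inv
  have hdeg : ((1 + X) ^ k : R[X]).natDegree ≤ 2 * k := by
    have hone : (1 + X : R[X]).natDegree ≤ 1 :=
      (natDegree_add_le _ _).trans (by simp [natDegree_X_le])
    exact (natDegree_pow_le_of_le k hone).trans (by omega)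
  have htwist := aeval_mobiusTwist hdeg hw
  have hcoe (q : R[X]) : aeval (PowerSeries.X : PowerSeries R) q = q := by
    simpa using DFunLike.congr_fun
      (algHom_ext (f := aeval PowerSeries.X) (g := coeToPowerSeries.algHom R) (by simp)) q
  apply Polynomial.coe_injective R
  rw [← hcoe, htwist, pow_mul, map_pow, ← mul_pow, ← hcoe]
  simp only [map_pow, map_mul, map_add, map_one, map_ofNat, aeval_X]
  congr 1
  linear_combination (1 + PowerSeries.X) * PowerSeries.X * hw

variable (R) in
/-- The `R`-module of solutions `(h₀, …, h_{N-1})` of the binomial system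
`h_ℓ = ∑_{j ≤ ℓ} h_j C(a - j, ℓ - j)`, `ℓ < N`, each extended by zero to a sequence. -/
def binomialFixed (a N : ℕ) : Submodule R (ℕ → R) where
  carrier := {h | (∀ j, N ≤ j → h j = 0) ∧
    ∀ ℓ < N, h ℓ = ∑ j ∈ Finset.range (ℓ + 1), h j * ((a - j).choose (ℓ - j) : R)}
  zero_mem' := by simp
  add_mem' {g h} hg hh := by
    refine ⟨fun j hj => by simp [hg.1 j hj, hh.1 j hj], fun ℓ hℓ => ?_⟩
    simp only [Pi.add_apply, add_mul, Finset.sum_add_distrib, ← hg.2 ℓ hℓ, ← hh.2 ℓ hℓ]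
  smul_mem' c h hh := by
    refine ⟨fun j hj => by simp [hh.1 j hj], fun ℓ hℓ => ?_⟩
    simp only [Pi.smul_apply, smul_eq_mul, mul_assoc, ← Finset.mul_sum, ← hh.2 ℓ hℓ]

lemma mem_binomialFixed_iff_X_pow_dvd {a N : ℕ} {h : ℕ → R} {p : R[X]}
    (hzero : ∀ j, N ≤ j → h j = 0) (hcoeff : ∀ j < N, p.coeff j = h j) :
    h ∈ binomialFixed R a N ↔ X ^ N ∣ p - mobiusTwist a p := by
  rw [X_pow_dvd_iff]
  refine (and_iff_right hzero).trans (forall₂_congr fun ℓ hℓ => ?_)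
  rw [coeff_sub, coeff_mobiusTwist, sub_eq_zero, hcoeff ℓ hℓ]
  refine Eq.congr_right (Finset.sum_congr rfl fun j hj => ?_)
  rw [hcoeff j (by have := Finset.mem_range.1 hj; omega)]

lemma mem_binomialFixed_succ_iff {a N : ℕ} {h : ℕ → R} (h0 : h 0 = 0) :
    h ∈ binomialFixed R (a + 1) (N + 1) ↔ (fun j => h (j + 1)) ∈ binomialFixed R a N := by
  have hshift (ℓ : ℕ) : ∑ j ∈ Finset.range (ℓ + 2), h j * ((a + 1 - j).choose (ℓ + 1 - j) : R) =
      ∑ j ∈ Finset.range (ℓ + 1), h (j + 1) * ((a - j).choose (ℓ - j) : R) := by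
    simp [Finset.sum_range_succ' _ (ℓ + 1), h0]
  constructor
  · rintro ⟨hzero, hfix⟩
    exact ⟨fun j hj => hzero _ (by omega), fun ℓ hℓ => (hfix _ (by omega)).trans (hshift ℓ)⟩
  · rintro ⟨hzero, hfix⟩
    refine ⟨fun j hj => ?_, fun ℓ hℓ => ?_⟩
    · obtain ⟨i, rfl⟩ := Nat.exists_eq_add_of_le' (show 1 ≤ j by omega)
      exact hzero i (by omega)
    · cases ℓ with
      | zero => simp
      | succ i => exact (hfix i (by omega)).trans (hshift i).symm

/-- The map `h ↦ h₀` on `binomialFixed R a N`, whose kernel and range give the recursion for the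
number of solutions. -/
def binomialFixedHead (a N : ℕ) : binomialFixed R a N →ₗ[R] R :=
  (LinearMap.proj 0).domRestrict _

@[simp]
lemma binomialFixedHead_apply {a N : ℕ} (h : binomialFixed R a N) :
    binomialFixedHead a N h = h.1 0 := rfl

/-- Deleting the leading zero identifies the solutions with `h₀ = 0` with the solutions of the
system one size smaller. -/
def kerBinomialFixedHeadEquiv (a N : ℕ) :
    LinearMap.ker (binomialFixedHead (R := R) (a + 1) (N + 1)) ≃ binomialFixed R a N where
  toFun h := ⟨fun j => h.1.1 (j + 1), (mem_binomialFixed_succ_iff h.2).1 h.1.2⟩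
  invFun g := ⟨⟨fun j => Nat.casesOn j 0 g.1, (mem_binomialFixed_succ_iff rfl).2 g.2⟩,
    LinearMap.mem_ker.2 rfl⟩
  left_inv h := by
    ext j
    cases j with
    | zero => exact h.2.symm
    | succ j => rfl
  right_inv _ := rfl

lemma natCard_binomialFixed_succ (a N : ℕ) :
    Nat.card (binomialFixed R (a + 1) (N + 1)) =
      Nat.card (binomialFixed R a N) *
        Nat.card (LinearMap.range (binomialFixedHead (R := R) (a + 1) (N + 1))) := by
  rw [Submodule.card_eq_card_quotient_mul_card (LinearMap.ker (binomialFixedHead (a + 1) (N + 1))),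
    Nat.card_congr (kerBinomialFixedHeadEquiv a N),
    Nat.card_congr (LinearMap.quotKerEquivRange _).toEquiv]

lemma natCard_binomialFixed_one (a : ℕ) : Nat.card (binomialFixed R a 1) = Nat.card R := by
  refine Nat.card_congr
    { toFun h := h.1 0
      invFun c := ⟨fun j => Nat.casesOn j c fun _ => 0, ?_, ?_⟩
      left_inv h := ?_
      right_inv c := rfl }
  · intro j hj
    obtain ⟨i, rfl⟩ := Nat.exists_eq_add_of_le' hj
    rfl
  · intro ℓ hℓ
    obtain rfl : ℓ = 0 := by omega
    simp
  · ext j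
    cases j with
    | zero => rfl
    | succ j => exact (h.2.1 _ (by omega)).symm

variable [CharP R 2]

-- For odd `a` the equation with `ℓ = 1` reads `h₁ = h₀ + h₁`.
lemma range_binomialFixedHead_of_odd {a N : ℕ} (ha : Odd a) (hN : 2 ≤ N) :
    LinearMap.range (binomialFixedHead (R := R) a N) = ⊥ := by
  rw [LinearMap.range_eq_bot]
  ext h
  have hcast : (a : R) = 1 := (CharTwo.natCast_eq_ite ..).trans (by simp [ha])
  simpa [Finset.sum_range_succ, hcast] using h.2.2 1 (by omega)

lemma range_binomialFixedHead_of_even {a N : ℕ} (ha : Even a) (hN : 0 < N) :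
    LinearMap.range (binomialFixedHead (R := R) a N) = ⊤ := by
  obtain ⟨k, rfl⟩ := ha.two_dvd
  let b : ℕ → R := fun j => if j < N then ((1 + X : R[X]) ^ k).coeff j else 0
  have hfix : mobiusTwist (2 * k) ((1 + X) ^ k : R[X]) = (1 + X) ^ k := by
    rw [mobiusTwist_one_add_X_pow, CharTwo.two_eq_zero, zero_mul, add_zero, mul_one]
  have hb : b ∈ binomialFixed R (2 * k) N := by
    rw [mem_binomialFixed_iff_X_pow_dvd (p := (1 + X) ^ k), hfix, sub_self]
    · exact dvd_zero _
    · exact fun j hj => if_neg hj.not_gt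
    · exact fun j hj => (if_pos hj).symm
  refine LinearMap.range_eq_top.2 fun c => ⟨c • ⟨b, hb⟩, ?_⟩
  simp [b, hN, coeff_one_add_X_pow]

theorem natCard_binomialFixed {N : ℕ} (d : ℕ) (hN : 0 < N) :
    Nat.card (binomialFixed R (N + 2 * d) N) = Nat.card R ^ (N / 2 + 1) := by
  induction N, hN using Nat.le_induction with
  | base => rw [natCard_binomialFixed_one]; simp
  | succ N hN ih =>
    rw [add_right_comm, natCard_binomialFixed_succ, ih]
    rcases Nat.even_or_odd N with hpar | hpar
    · have hodd : Odd (N + 2 * d + 1) := by grind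
      rw [range_binomialFixedHead_of_odd hodd (by omega),
        Nat.card_unique (α := (⊥ : Submodule R R)), mul_one]
      congr 1; grind
    · have heven : Even (N + 2 * d + 1) := by grind
      rw [range_binomialFixedHead_of_even heven (by omega),
        Nat.card_congr Submodule.topEquiv.toEquiv, ← pow_succ]
      congr 1; grind

end BinomialFixed

section CubicTruncation

variable {K A : Type*} [CommRing K] [CommRing A]

/-- The element `c₀ + u c₁ + u² c₂` of `A`, where `ι` embeds the coefficients. -/
def cubicExpand (ι : K →+* A) (u : A) (c₀ c₁ c₂ : K) : A :=
  ι c₀ + u * ι c₁ + u ^ 2 * ι c₂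

/-- `A` is the truncated polynomial ring `K[u]/⟨u³⟩`, with `ι` the inclusion of the constants:
every element is `c₀ + u c₁ + u² c₂` for unique `c₀, c₁, c₂`. -/
structure IsCubicTruncation (ι : K →+* A) (u : A) : Prop where
  pow_three : u ^ 3 = 0
  exists_eq : ∀ z, ∃ c₀ c₁ c₂, z = cubicExpand ι u c₀ c₁ c₂
  eq_zero : ∀ {c₀ c₁ c₂}, cubicExpand ι u c₀ c₁ c₂ = 0 → c₀ = 0 ∧ c₁ = 0 ∧ c₂ = 0

/-- The ideal `⟨p + u² h, u q, u² r⟩` of `K[u]/⟨u³⟩`. -/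
def cubicIdeal (ι : K →+* A) (u : A) (p q r h : K) : Ideal A :=
  Ideal.span {ι p + u ^ 2 * ι h, u * ι q, u ^ 2 * ι r}

variable {ι : K →+* A} {u : A} {p q r h : K}

lemma map_cubicIdeal {F : Type*} [FunLike F A A] [RingHomClass F A A] {σ : F} {τ : K → K}
    (hι : ∀ z, σ (ι z) = ι (τ z)) (hu : σ u = u) :
    (cubicIdeal ι u p q r h).map σ = cubicIdeal ι u (τ p) (τ q) (τ r) (τ h) := by
  simp [cubicIdeal, Ideal.map_span, Set.image_insert_eq, hι, hu]

lemma cubicIdeal_unit_mul {v w t : K} (hv : IsUnit v) (hw : IsUnit w) (ht : IsUnit t) :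
    cubicIdeal ι u (v * p) (w * q) (t * r) (v * h) = cubicIdeal ι u p q r h := by
  have hp : ι (v * p) + u ^ 2 * ι (v * h) = ι v * (ι p + u ^ 2 * ι h) := by
    simp only [map_mul]; ring
  have hq : u * ι (w * q) = ι w * (u * ι q) := by simp only [map_mul]; ring
  have hr : u ^ 2 * ι (t * r) = ι t * (u ^ 2 * ι r) := by simp only [map_mul]; ring
  simp only [cubicIdeal, hp, hq, hr, Ideal.span_insert, Ideal.span_singleton_mul_left_unit,
    hv.map ι, hw.map ι, ht.map ι]

namespace IsCubicTruncation

lemma cubicExpand_mul (hA : IsCubicTruncation ι u) (a₀ a₁ a₂ b₀ b₁ b₂ : K) :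
    cubicExpand ι u a₀ a₁ a₂ * cubicExpand ι u b₀ b₁ b₂ =
      cubicExpand ι u (a₀ * b₀) (a₀ * b₁ + a₁ * b₀) (a₀ * b₂ + a₁ * b₁ + a₂ * b₀) := by
  simp only [cubicExpand, map_add, map_mul]
  linear_combination (ι a₁ * ι b₂ + ι a₂ * ι b₁ + u * ι a₂ * ι b₂) * hA.pow_three

lemma cubicExpand_eq_zero_iff (hA : IsCubicTruncation ι u) {c₀ c₁ c₂ : K} :
    cubicExpand ι u c₀ c₁ c₂ = 0 ↔ c₀ = 0 ∧ c₁ = 0 ∧ c₂ = 0 :=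
  ⟨hA.eq_zero, by rintro ⟨rfl, rfl, rfl⟩; simp [cubicExpand]⟩

lemma cubicExpand_mul_eq_zero_iff (hA : IsCubicTruncation ι u) {a₀ a₁ a₂ b₀ b₁ b₂ : K} :
    cubicExpand ι u a₀ a₁ a₂ * cubicExpand ι u b₀ b₁ b₂ = 0 ↔
      a₀ * b₀ = 0 ∧ a₀ * b₁ + a₁ * b₀ = 0 ∧ a₀ * b₂ + a₁ * b₁ + a₂ * b₀ = 0 := by
  rw [hA.cubicExpand_mul, hA.cubicExpand_eq_zero_iff]

lemma mem_cubicIdeal_iff (hA : IsCubicTruncation ι u) (hqp : q ∣ p) (hrq : r ∣ q) {c₀ c₁ c₂ : K} :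
    cubicExpand ι u c₀ c₁ c₂ ∈ cubicIdeal ι u p q r h ↔
      ∃ e, c₀ = p * e ∧ q ∣ c₁ ∧ r ∣ c₂ - h * e := by
  simp only [cubicIdeal, Ideal.mem_span_insert, Ideal.mem_span_singleton']
  constructor
  · rintro ⟨x, _, ⟨y, _, ⟨z, rfl⟩, rfl⟩, hc⟩
    obtain ⟨x₀, x₁, x₂, rfl⟩ := hA.exists_eq x
    obtain ⟨y₀, y₁, y₂, rfl⟩ := hA.exists_eq y
    obtain ⟨z₀, z₁, z₂, rfl⟩ := hA.exists_eq z
    have hsub : cubicExpand ι u (c₀ - p * x₀) (c₁ - (p * x₁ + q * y₀))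
        (c₂ - (h * x₀ + p * x₂ + q * y₁ + r * z₀)) = 0 := by
      simp only [cubicExpand, map_sub, map_add, map_mul] at hc ⊢
      linear_combination hc + (ι h * ι x₁ + u * ι h * ι x₂ + ι q * ι y₂ + ι r * ι z₁ +
        u * ι r * ι z₂) * hA.pow_three
    obtain ⟨h₀, h₁, h₂⟩ := hA.eq_zero hsub
    refine ⟨x₀, sub_eq_zero.1 h₀, ?_, ?_⟩
    · rw [sub_eq_zero.1 h₁]
      exact dvd_add (hqp.mul_right _) (dvd_mul_right _ _)
    · have hc₂ : c₂ - h * x₀ = p * x₂ + q * y₁ + r * z₀ := by linear_combination h₂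
      rw [hc₂]
      exact dvd_add (dvd_add ((hrq.trans hqp).mul_right _) (hrq.mul_right _)) (dvd_mul_right _ _)
  · rintro ⟨e, rfl, ⟨f, rfl⟩, ⟨g, hg⟩⟩
    refine ⟨ι e, _, ⟨ι f, _, ⟨ι g, rfl⟩, rfl⟩, ?_⟩
    rw [sub_eq_iff_eq_add.1 hg]
    simp only [cubicExpand, map_add, map_mul]
    ring

lemma head_mem_cubicIdeal : cubicExpand ι u p 0 h ∈ cubicIdeal ι u p q r h :=
  Ideal.subset_span (by simp [cubicExpand])

lemma dvd_of_cubicIdeal_le (hA : IsCubicTruncation ι u) {p' q' r' h' : K} (hqp : q' ∣ p')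
    (hrq : r' ∣ q') (hle : cubicIdeal ι u p q r h ≤ cubicIdeal ι u p' q' r' h') : p' ∣ p := by
  obtain ⟨e, he, -⟩ := (hA.mem_cubicIdeal_iff hqp hrq).1 (hle head_mem_cubicIdeal)
  exact ⟨e, he⟩

lemma cubicIdeal_eq_iff (hA : IsCubicTruncation ι u) (hqp : q ∣ p) (hrq : r ∣ q)
    (hp : ∀ z, p * z = 0 ↔ r ∣ z) {h' : K} :
    cubicIdeal ι u p q r h = cubicIdeal ι u p q r h' ↔ r ∣ h - h' := by
  constructor
  · intro heq
    have hmem : cubicExpand ι u p 0 h ∈ cubicIdeal ι u p q r h' := heq ▸ head_mem_cubicIdeal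
    obtain ⟨e, hpe, -, hr⟩ := (hA.mem_cubicIdeal_iff hqp hrq).1 hmem
    have he : r ∣ e - 1 := (hp _).1 (by linear_combination -hpe)
    have hsplit : h - h' = (h - h' * e) + h' * (e - 1) := by ring
    exact hsplit ▸ dvd_add hr (he.mul_left h')
  · intro hdvd
    ext z
    obtain ⟨c₀, c₁, c₂, rfl⟩ := hA.exists_eq z
    simp only [hA.mem_cubicIdeal_iff hqp hrq]
    refine exists_congr fun e => and_congr_right fun _ => and_congr_right fun _ => ?_
    refine dvd_iff_dvd_of_dvd_sub ?_
    have hsplit : c₂ - h * e - (c₂ - h' * e) = -((h - h') * e) := by ring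
    exact hsplit ▸ (hdvd.mul_right e).neg_right

theorem annihilator_cubicIdeal (hA : IsCubicTruncation ι u) (hqp : q ∣ p) (hrq : r ∣ q)
    (hp : ∀ z, p * z = 0 ↔ r ∣ z) (hq : ∀ z, q * z = 0 ↔ q ∣ z) (hr : ∀ z, r * z = 0 ↔ p ∣ z) :
    (cubicIdeal ι u p q r h).annihilator = cubicIdeal ι u p q r (-h) := by
  ext z
  obtain ⟨c₀, c₁, c₂, rfl⟩ := hA.exists_eq z
  have hgen : cubicIdeal ι u p q r h =
      Ideal.span {cubicExpand ι u p 0 h, cubicExpand ι u 0 q 0, cubicExpand ι u 0 0 r} := by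
    simp [cubicIdeal, cubicExpand]
  rw [hgen, Ideal.span, Submodule.mem_annihilator_span, hA.mem_cubicIdeal_iff hqp hrq]
  simp only [Subtype.forall, Set.mem_insert_iff, Set.mem_singleton_iff, forall_eq_or_imp, forall_eq,
    smul_eq_mul, hA.cubicExpand_mul_eq_zero_iff, mul_zero, zero_add, add_zero, true_and]
  constructor
  · rintro ⟨⟨-, -, hhead⟩, ⟨-, hmid⟩, hlast⟩
    obtain ⟨e, rfl⟩ := (hr c₀).1 (by linear_combination hlast)
    exact ⟨e, rfl, (hq c₁).1 (by linear_combination hmid),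
      (hp _).1 (by linear_combination hhead)⟩
  · rintro ⟨e, rfl, hc₁, hc₂⟩
    have hpq : p * q = 0 := by rw [mul_comm]; exact (hq p).2 hqp
    have hpp : p * p = 0 := (hp p).2 (hrq.trans hqp)
    have hrp : r * p = 0 := (hr p).2 dvd_rfl
    have hqc₁ := (hq c₁).2 hc₁
    have hpc₁ : p * c₁ = 0 := by
      obtain ⟨k, rfl⟩ := hqp
      rw [mul_right_comm, hqc₁, zero_mul]
    have hhead := (hp _).2 hc₂
    refine ⟨⟨?_, ?_, ?_⟩, ⟨?_, ?_⟩, ?_⟩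
    · linear_combination e * hpp
    · linear_combination hpc₁
    · linear_combination hhead
    · linear_combination e * hpq
    · linear_combination hqc₁
    · linear_combination e * hrp

end IsCubicTruncation

end CubicTruncation

section NilpotentRoot

variable {S A : Type*} [CommRing S] [CommRing A] [Algebra S A] {n i j : ℕ}

lemma root_pow_dvd_map_iff (hA : IsAdjoinRoot A (X ^ n : S[X])) (hi : i ≤ n) {p : S[X]} :
    hA.root ^ i ∣ hA.map p ↔ X ^ i ∣ p := by
  refine ⟨?_, fun hdvd => by simpa using map_dvd hA.map hdvd⟩
  rintro ⟨z, hz⟩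
  obtain ⟨g, rfl⟩ := hA.map_surjective z
  have hdiff : X ^ n ∣ p - X ^ i * g := by
    rw [← hA.map_eq_zero_iff, map_sub, hz, map_mul, map_pow, hA.map_X, sub_self]
  exact (dvd_iff_dvd_of_dvd_sub ((pow_dvd_pow X hi).trans hdiff)).2 (dvd_mul_right _ _)

lemma root_pow_mul_eq_zero_iff (hA : IsAdjoinRoot A (X ^ n : S[X])) (hij : i + j = n) {z : A} :
    hA.root ^ i * z = 0 ↔ hA.root ^ j ∣ z := by
  obtain ⟨p, rfl⟩ := hA.map_surjective z
  rw [root_pow_dvd_map_iff hA (by omega), ← hA.map_X, ← map_pow, ← map_mul, hA.map_eq_zero_iff,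
    ← hij, pow_add]
  exact (monic_X_pow i).isRegular.left.dvd_cancel_left

end NilpotentRoot

section CyclicAlgebra

variable {S : Type*} [CommRing S] [CharP S 2]

variable (S) in
/-- The algebra `S[x]/⟨xⁿ + 1⟩`, that is `S[x]/⟨xⁿ - 1⟩`, since `S` has characteristic two in all
that follows. -/
abbrev CyclicAlgebra (n : ℕ) : Type _ := AdjoinRoot (X ^ n + 1 : S[X])

namespace CyclicAlgebra

variable (S) in
/-- The class of `x`. -/
abbrev gen (n : ℕ) : CyclicAlgebra S n := AdjoinRoot.root _

variable (S) in
lemma two_eq_zero (n : ℕ) : (2 : CyclicAlgebra S n) = 0 := by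
  rw [← map_ofNat (algebraMap S _) 2, CharTwo.two_eq_zero, map_zero]

lemma gen_pow (n : ℕ) : gen S n ^ n = 1 := by
  have hroot := AdjoinRoot.eval₂_root (X ^ n + 1 : S[X])
  simp only [eval₂_add, eval₂_pow, eval₂_X, eval₂_one] at hroot
  linear_combination hroot - two_eq_zero S n

variable (S) in
/-- The involution `f(x) ↦ f(x⁻¹)`. -/
def conj (n : ℕ) : CyclicAlgebra S n →ₐ[S] CyclicAlgebra S n :=
  AdjoinRoot.liftAlgHom (X ^ n + 1) (Algebra.ofId S _) (gen S n ^ (n - 1)) <| by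
    have hpow : (gen S n ^ (n - 1)) ^ n = 1 := by rw [pow_right_comm, gen_pow, one_pow]
    simp [hpow, one_add_one_eq_two, two_eq_zero]

lemma conj_gen (n : ℕ) : conj S n (gen S n) = gen S n ^ (n - 1) := AdjoinRoot.liftAlgHom_root ..

variable {n : ℕ} [NeZero n]

lemma gen_mul_conj_gen : gen S n * conj S n (gen S n) = 1 := by
  rw [conj_gen, mul_pow_sub_one (NeZero.ne n), gen_pow]

lemma conj_gen_add_one : conj S n (gen S n + 1) = (gen S n + 1) * conj S n (gen S n) := by
  rw [map_add, map_one]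
  linear_combination -gen_mul_conj_gen (S := S) (n := n)

lemma gen_pow_mul_conj_aeval {a : ℕ} {p : S[X]} (hp : p.natDegree ≤ a) :
    gen S n ^ a * conj S n (aeval (gen S n + 1) p) = aeval (gen S n + 1) (mobiusTwist a p) := by
  have hgen : 1 + (gen S n + 1) = gen S n := by linear_combination two_eq_zero S n
  rw [aeval_mobiusTwist hp (by rw [hgen, gen_mul_conj_gen]), hgen, ← aeval_algHom_apply,
    conj_gen_add_one]

variable (S) in
/-- In characteristic two the algebra `S[x]/⟨x^(2^s) + 1⟩` is also `S[y]/⟨y^(2^s)⟩`, with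
`y = x + 1`. -/
def isAdjoinRoot (s : ℕ) : IsAdjoinRoot (CyclicAlgebra S (2 ^ s)) (X ^ 2 ^ s : S[X]) where
  map := (AdjoinRoot.mkₐ _).comp (taylorEquiv 1).toAlgHom
  map_surjective := AdjoinRoot.mk_surjective.comp (taylorEquiv 1).surjective
  ker_map := by
    have htaylor : (X ^ 2 ^ s + 1 : S[X]) = taylorEquiv 1 (X ^ 2 ^ s) := by
      refine Eq.trans ?_ (taylor_X_pow 1 (2 ^ s)).symm
      rw [add_pow_char_pow, C_1, one_pow]
    ext p
    rw [RingHom.mem_ker, Ideal.mem_span_singleton]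
    refine AdjoinRoot.mk_eq_zero.trans ?_
    rw [htaylor]
    exact map_dvd_iff (taylorEquiv 1)

lemma isAdjoinRoot_root (s : ℕ) : (isAdjoinRoot S s).root = gen S (2 ^ s) + 1 := by
  change AdjoinRoot.mk _ (taylor 1 X) = _
  rw [taylor_X, map_add, AdjoinRoot.mk_X, C_1, map_one]

lemma gen_add_one_pow_dvd_aeval_iff {s i : ℕ} (hi : i ≤ 2 ^ s) {p : S[X]} :
    (gen S (2 ^ s) + 1) ^ i ∣ aeval (gen S (2 ^ s) + 1) p ↔ X ^ i ∣ p := by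
  rw [← isAdjoinRoot_root, IsAdjoinRoot.aeval_root_eq_map, root_pow_dvd_map_iff _ hi]

lemma gen_add_one_pow_mul_eq_zero_iff {s i j : ℕ} (hij : i + j = 2 ^ s)
    {z : CyclicAlgebra S (2 ^ s)} :
    (gen S (2 ^ s) + 1) ^ i * z = 0 ↔ (gen S (2 ^ s) + 1) ^ j ∣ z := by
  rw [← isAdjoinRoot_root, root_pow_mul_eq_zero_iff _ hij]

end CyclicAlgebra

end CyclicAlgebra

section CubicTruncationRR

variable {m s : ℕ}

lemma KtoR_xK : KtoR m s (xK m s) = xR m s := AdjoinRoot.lift_root _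

lemma KtoR_algebraMap (t : Fq m) :
    KtoR m s (algebraMap (Fq m) (KK m s) t) = algebraMap (R3 m) (RR m s) (algebraMap (Fq m) _ t) :=
  AdjoinRoot.lift_of _

lemma uu_pow_three : uu m ^ 3 = 0 := by
  rw [uu, ← AdjoinRoot.mk_X, ← map_pow, AdjoinRoot.mk_self]

lemma uR_pow_three : uR m s ^ 3 = 0 := by
  rw [uR, ← map_pow, uu_pow_three, map_zero]

lemma mk_KtoR_muRK (z : RR m s) :
    Ideal.Quotient.mk (Ideal.span {uR m s}) (KtoR m s (muRK m s z)) = Ideal.Quotient.mk _ z := by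
  suffices hcomp : ((Ideal.Quotient.mk (Ideal.span {uR m s})).comp (KtoR m s)).comp (muRK m s) =
      Ideal.Quotient.mk _ from DFunLike.congr_fun hcomp z
  have hu : Ideal.Quotient.mk (Ideal.span {uR m s}) (uR m s) = 0 :=
    Ideal.Quotient.eq_zero_iff_mem.2 (Ideal.mem_span_singleton_self _)
  refine AdjoinRoot.ringHom_ext (AdjoinRoot.ringHom_ext (RingHom.ext fun t => ?_) ?_) ?_
  · have hmu : muRK m s (AdjoinRoot.of _ (AdjoinRoot.of _ t)) = algebraMap (Fq m) _ t := by
      simp [muRK, epsR3]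
    simp only [RingHom.comp_apply, hmu, KtoR_algebraMap]
    rfl
  · have hmu : muRK m s (uR m s) = 0 := by simp [muRK, epsR3, uR, uu]
    change Ideal.Quotient.mk _ (KtoR m s (muRK m s (uR m s))) = Ideal.Quotient.mk _ (uR m s)
    rw [hmu, map_zero, map_zero, hu]
  · have hmu : muRK m s (xR m s) = xK m s := AdjoinRoot.lift_root _
    change Ideal.Quotient.mk _ (KtoR m s (muRK m s (xR m s))) = Ideal.Quotient.mk _ (xR m s)
    rw [hmu, KtoR_xK]

lemma exists_eq_KtoR_add_uR_mul (z : RR m s) : ∃ c w, z = KtoR m s c + uR m s * w := by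
  obtain ⟨w, hw⟩ := Ideal.mem_span_singleton'.1 (Ideal.Quotient.eq.1 (mk_KtoR_muRK z).symm)
  exact ⟨_, w, by linear_combination -hw⟩

variable (m s) in
/-- The identification of `𝓡` with `𝓚[u]/⟨u³⟩`. -/
def toAdjoinRootKK : RR m s →+* AdjoinRoot (X ^ 3 : (KK m s)[X]) :=
  AdjoinRoot.lift (AdjoinRoot.map (algebraMap (Fq m) (KK m s)) (X ^ 3) (X ^ 3) (by simp))
    (AdjoinRoot.of _ (xK m s)) <| by
      simp only [eval₂_add, eval₂_pow, eval₂_X, eval₂_one]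
      rw [← map_pow, ← map_one (AdjoinRoot.of _), ← map_add, xK_pow_add_one, map_zero]

lemma toAdjoinRootKK_uR : toAdjoinRootKK m s (uR m s) = AdjoinRoot.root _ := by
  simp [toAdjoinRootKK, uR, uu]

lemma toAdjoinRootKK_KtoR (z : KK m s) : toAdjoinRootKK m s (KtoR m s z) = AdjoinRoot.of _ z := by
  suffices hcomp : (toAdjoinRootKK m s).comp (KtoR m s) = AdjoinRoot.of _ from
    DFunLike.congr_fun hcomp z
  refine AdjoinRoot.ringHom_ext (RingHom.ext fun t => ?_) ?_
  · change toAdjoinRootKK m s (KtoR m s (algebraMap (Fq m) _ t)) = _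
    rw [KtoR_algebraMap]
    simp [toAdjoinRootKK]
  · change toAdjoinRootKK m s (KtoR m s (xK m s)) = _
    rw [KtoR_xK]
    exact AdjoinRoot.lift_root _

theorem isCubicTruncation_RR : IsCubicTruncation (KtoR m s) (uR m s) where
  pow_three := uR_pow_three
  exists_eq z := by
    obtain ⟨c₀, w₀, rfl⟩ := exists_eq_KtoR_add_uR_mul z
    obtain ⟨c₁, w₁, rfl⟩ := exists_eq_KtoR_add_uR_mul w₀
    obtain ⟨c₂, w₂, rfl⟩ := exists_eq_KtoR_add_uR_mul w₁
    exact ⟨c₀, c₁, c₂, by rw [cubicExpand]; linear_combination w₂ * uR_pow_three (m := m) (s := s)⟩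
  eq_zero {c₀ c₁ c₂} hzero := by
    have hmk : AdjoinRoot.mk (X ^ 3 : (KK m s)[X]) (C c₀ + X * C c₁ + X ^ 2 * C c₂) = 0 := by
      have himage := congrArg (toAdjoinRootKK m s) hzero
      simp only [cubicExpand, map_add, map_mul, map_pow, map_zero, toAdjoinRootKK_uR,
        toAdjoinRootKK_KtoR] at himage
      simpa only [map_add, map_mul, map_pow, AdjoinRoot.mk_C, AdjoinRoot.mk_X] using himage
    rw [AdjoinRoot.mk_eq_zero, X_pow_dvd_iff] at hmk
    refine ⟨?_, ?_, ?_⟩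
    · simpa [coeff_X_pow_mul'] using hmk 0 (by norm_num)
    · simpa [coeff_X_pow_mul', coeff_X_mul, coeff_C] using hmk 1 (by norm_num)
    · simpa [coeff_X_pow_mul', coeff_X_mul, coeff_C] using hmk 2 (by norm_num)

end CubicTruncationRR

section Duality

variable {m s : ℕ}

instance : Nontrivial (R3 m) := AdjoinRoot.nontrivial _ (by simp)

instance : CharP (R3 m) 2 :=
  charP_of_injective_algebraMap (algebraMap (Fq m) (R3 m)).injective 2

variable (m s) in
/-- The conjugation `f(x) ↦ f(x⁻¹)` of `𝓡`. -/
abbrev conjRR : RR m s →ₐ[R3 m] RR m s := CyclicAlgebra.conj (R3 m) (2 ^ s)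

variable (m s) in
/-- The conjugation `f(x) ↦ f(x⁻¹)` of `𝓚`. -/
abbrev conjKK : KK m s →ₐ[Fq m] KK m s := CyclicAlgebra.conj (Fq m) (2 ^ s)

lemma conjRR_xR : conjRR m s (xR m s) = xR m s ^ (2 ^ s - 1) := CyclicAlgebra.conj_gen _

lemma conjKK_xK : conjKK m s (xK m s) = xK m s ^ (2 ^ s - 1) := CyclicAlgebra.conj_gen _

lemma conjRR_KtoR (z : KK m s) : conjRR m s (KtoR m s z) = KtoR m s (conjKK m s z) := by
  suffices hcomp : (conjRR m s).toRingHom.comp (KtoR m s) =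
      (KtoR m s).comp (conjKK m s).toRingHom from DFunLike.congr_fun hcomp z
  refine AdjoinRoot.ringHom_ext (RingHom.ext fun t => ?_) ?_
  · change conjRR m s (KtoR m s (algebraMap (Fq m) _ t)) =
      KtoR m s (conjKK m s (algebraMap (Fq m) _ t))
    rw [AlgHom.commutes, KtoR_algebraMap, AlgHom.commutes]
  · change conjRR m s (KtoR m s (xK m s)) = KtoR m s (conjKK m s (xK m s))
    rw [KtoR_xK, conjRR_xR, conjKK_xK, map_pow, KtoR_xK]

lemma conjRR_uR : conjRR m s (uR m s) = uR m s := (conjRR m s).commutes _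

lemma natDegree_gR : (gR m s).natDegree = 2 ^ s :=
  natDegree_X_pow_add_C (r := (1 : R3 m))

lemma xR_pow_two_pow : xR m s ^ 2 ^ s = 1 := CyclicAlgebra.gen_pow _

lemma coeffR_xR_pow (i : ℕ) {j : ℕ} (hj : j < 2 ^ s) :
    coeffR m s (xR m s ^ i) j = if i ≡ j [MOD 2 ^ s] then 1 else 0 := by
  have hmod : xR m s ^ i = AdjoinRoot.mk (gR m s) (X ^ (i % 2 ^ s)) := by
    rw [pow_eq_pow_mod i xR_pow_two_pow, map_pow, AdjoinRoot.mk_X, xR]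
  have hdeg : degree (X ^ (i % 2 ^ s) : (R3 m)[X]) < (gR m s).degree := by
    rw [degree_eq_natDegree (gR_monic m s).ne_zero, natDegree_gR, degree_X_pow]
    exact_mod_cast Nat.mod_lt i (Nat.two_pow_pos s)
  rw [hmod, coeffR, repR, AdjoinRoot.modByMonicHom_mk,
    (modByMonic_eq_self_iff (gR_monic m s)).2 hdeg, coeff_X_pow]
  simp only [Nat.ModEq, Nat.mod_eq_of_lt hj, eq_comm]

lemma dotR_xR_pow (c : RR m s) {j : ℕ} (hj : j < 2 ^ s) :
    dotR m s c (xR m s ^ j) = coeffR m s c j := by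
  rw [dotR, Finset.sum_eq_single_of_mem j (Finset.mem_range.2 hj),
    coeffR_xR_pow j hj, if_pos (Nat.ModEq.refl j), mul_one]
  intro i hi hij
  have hne : ¬ j ≡ i [MOD 2 ^ s] := fun hmod =>
    hij (hmod.eq_of_lt_of_lt hj (Finset.mem_range.1 hi)).symm
  rw [coeffR_xR_pow j (Finset.mem_range.1 hi), if_neg hne, mul_zero]

lemma eq_zero_of_forall_dotR_eq_zero {z : RR m s} (hz : ∀ e, dotR m s z e = 0) : z = 0 := by
  refine (AdjoinRoot.powerBasisAux' (gR_monic m s)).ext_elem fun j => ?_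
  have hj : (j : ℕ) < 2 ^ s := j.2.trans_eq natDegree_gR
  rw [AdjoinRoot.powerBasisAux'_repr_apply_to_fun, map_zero, Finsupp.zero_apply]
  exact (dotR_xR_pow z hj).symm.trans (hz _)

variable (m s) in
/-- The dot product as a bilinear form over `R₃`. -/
def dotForm : RR m s →ₗ[R3 m] RR m s →ₗ[R3 m] R3 m :=
  let coeffForm (j : ℕ) := (lcoeff (R3 m) j).comp (AdjoinRoot.modByMonicHom (gR_monic m s))
  ∑ j ∈ Finset.range (2 ^ s), (LinearMap.mul (R3 m) (R3 m)).compl₁₂ (coeffForm j) (coeffForm j)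

lemma dotForm_apply (c d : RR m s) : dotForm m s c d = dotR m s c d := by
  simp [dotForm, dotR, coeffR, repR]

lemma dotR_eq_dotR_mul_conjRR (c d : RR m s) :
    dotR m s c d = dotR m s (c * conjRR m s d) 1 := by
  let conjForm := ((LinearMap.mul (R3 m) (RR m s)).compl₂ (conjRR m s).toLinearMap).compr₂
    ((dotForm m s).flip 1)
  let b := (AdjoinRoot.powerBasis' (gR_monic m s)).basis
  suffices hform : dotForm m s = conjForm by
    simpa [conjForm, dotForm_apply] using LinearMap.congr_fun₂ hform c d
  refine LinearMap.ext_basis b b fun i j => ?_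
  have hj : (j : ℕ) < 2 ^ s := j.2.trans_eq natDegree_gR
  have hb (i) : b i = xR m s ^ (i : ℕ) := PowerBasis.basis_eq_pow _ i
  have hmod : (i : ℕ) + (2 ^ s - 1) * (j : ℕ) ≡ 0 [MOD 2 ^ s] ↔ (i : ℕ) ≡ j [MOD 2 ^ s] := by
    have hsum : (i : ℕ) + (2 ^ s - 1) * (j : ℕ) + j = i + 2 ^ s * j := by
      rw [add_assoc, ← Nat.succ_mul, Nat.succ_eq_add_one, Nat.sub_add_cancel Nat.one_le_two_pow]
    rw [← Nat.ModEq.add_iff_right (Nat.ModEq.refl (j : ℕ)), hsum, zero_add]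
    simp [Nat.ModEq]
  have hconj : xR m s ^ (i : ℕ) * conjRR m s (xR m s ^ (j : ℕ)) =
      xR m s ^ ((i : ℕ) + (2 ^ s - 1) * (j : ℕ)) := by
    rw [map_pow, conjRR_xR, pow_add, pow_mul]
  have hone := dotR_xR_pow (xR m s ^ ((i : ℕ) + (2 ^ s - 1) * (j : ℕ))) (Nat.two_pow_pos s)
  rw [pow_zero] at hone
  simp only [conjForm, hb, dotForm_apply, LinearMap.compr₂_apply, LinearMap.compl₂_apply,
    LinearMap.mul_apply', AlgHom.toLinearMap_apply, LinearMap.flip_apply, hconj, hone,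
    dotR_xR_pow _ hj, coeffR_xR_pow _ hj, coeffR_xR_pow _ (Nat.two_pow_pos s), hmod]

theorem dualSet_eq_annihilator_map_conjRR (I : Ideal (RR m s)) :
    dualSet m s I = (I.map (conjRR m s)).annihilator := by
  ext c
  rw [SetLike.mem_coe, Ideal.map, Ideal.span, Submodule.mem_annihilator_span]
  simp only [Subtype.forall, Set.forall_mem_image, smul_eq_mul]
  refine ⟨fun hc d hd => eq_zero_of_forall_dotR_eq_zero fun e => ?_, fun hc d hd => ?_⟩
  · rw [dotR_eq_dotR_mul_conjRR, mul_assoc, ← map_mul, ← dotR_eq_dotR_mul_conjRR]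
    exact hc _ (I.mul_mem_right e hd)
  · rw [dotR_eq_dotR_mul_conjRR, hc hd, ← dotForm_apply, map_zero, LinearMap.zero_apply]

end Duality

section CyclicCode

variable {m s a b : ℕ}

/-- The code `⟨(x+1)ᵃ + u² z, u (x+1)^(2^(s-1)), u² (x+1)^(2^s-a)⟩`, where `z ∈ 𝓚`. -/
def cyclicCode (a : ℕ) (z : KK m s) : Ideal (RR m s) :=
  cubicIdeal (KtoR m s) (uR m s) ((xK m s + 1) ^ a) ((xK m s + 1) ^ 2 ^ (s - 1))
    ((xK m s + 1) ^ (2 ^ s - a)) z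

lemma xK_mul_conjKK_xK : xK m s * conjKK m s (xK m s) = 1 := CyclicAlgebra.gen_mul_conj_gen

lemma conjKK_xK_add_one_pow (k : ℕ) :
    conjKK m s ((xK m s + 1) ^ k) = conjKK m s (xK m s) ^ k * (xK m s + 1) ^ k := by
  rw [map_pow, ← mul_pow, mul_comm (conjKK m s (xK m s))]
  exact congrArg (· ^ k) CyclicAlgebra.conj_gen_add_one

lemma map_conjRR_cyclicCode (z : KK m s) :
    (cyclicCode a z).map (conjRR m s) = cyclicCode a (xK m s ^ a * conjKK m s z) := by
  have hunit (k : ℕ) : IsUnit (conjKK m s (xK m s) ^ k) :=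
    (IsUnit.of_mul_eq_one_right (xK m s) xK_mul_conjKK_xK).pow k
  have hz : conjKK m s (xK m s) ^ a * (xK m s ^ a * conjKK m s z) = conjKK m s z := by
    rw [← mul_assoc, ← mul_pow, mul_comm (conjKK m s (xK m s)), xK_mul_conjKK_xK, one_pow, one_mul]
  rw [cyclicCode, map_cubicIdeal (σ := conjRR m s) conjRR_KtoR conjRR_uR, cyclicCode,
    ← cubicIdeal_unit_mul (p := (xK m s + 1) ^ a) (hunit a) (hunit (2 ^ (s - 1)))
      (hunit (2 ^ s - a)), hz]
  simp only [conjKK_xK_add_one_pow]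

lemma xK_add_one_pow_mul_eq_zero_iff {i j : ℕ} (hij : i + j = 2 ^ s) (z : KK m s) :
    (xK m s + 1) ^ i * z = 0 ↔ (xK m s + 1) ^ j ∣ z :=
  CyclicAlgebra.gen_add_one_pow_mul_eq_zero_iff hij

lemma xK_add_one_pow_dvd_aeval_iff {i : ℕ} (hi : i ≤ 2 ^ s) {p : (Fq m)[X]} :
    (xK m s + 1) ^ i ∣ aeval (xK m s + 1) p ↔ X ^ i ∣ p :=
  CyclicAlgebra.gen_add_one_pow_dvd_aeval_iff hi

lemma xK_pow_mul_conjKK_aeval {p : (Fq m)[X]} (hp : p.natDegree ≤ a) :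
    xK m s ^ a * conjKK m s (aeval (xK m s + 1) p) = aeval (xK m s + 1) (mobiusTwist a p) :=
  CyclicAlgebra.gen_pow_mul_conj_aeval hp

lemma le_of_xK_add_one_pow_dvd (ha : a < 2 ^ s)
    (hdvd : (xK m s + 1) ^ b ∣ (xK m s + 1) ^ a) : b ≤ a := by
  by_contra! hab
  have haeval : (xK m s + 1) ^ (a + 1) ∣ aeval (xK m s + 1) (X ^ a : (Fq m)[X]) := by
    rw [map_pow, aeval_X]
    exact (pow_dvd_pow _ hab).trans hdvd
  have hX := (xK_add_one_pow_dvd_aeval_iff (Nat.succ_le_of_lt ha)).1 haeval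
  have hlt := (pow_dvd_pow_iff X_ne_zero not_isUnit_X).1 hX
  omega

lemma two_pow_pred_add_self (ha : 2 ^ (s - 1) ≤ a) (has : a < 2 ^ s) :
    2 ^ (s - 1) + 2 ^ (s - 1) = 2 ^ s := by
  cases s with
  | zero => simp at ha has; omega
  | succ k => rw [Nat.add_sub_cancel, pow_succ, mul_two]

lemma dualSet_cyclicCode (ha : 2 ^ (s - 1) ≤ a) (has : a < 2 ^ s) (z : KK m s) :
    dualSet m s (cyclicCode a z) = cyclicCode a (xK m s ^ a * conjKK m s z) := by
  have hhalf := two_pow_pred_add_self ha has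
  have hneg (w : KK m s) : -w = w := by
    linear_combination -w * CyclicAlgebra.two_eq_zero (Fq m) (2 ^ s)
  rw [dualSet_eq_annihilator_map_conjRR, map_conjRR_cyclicCode, cyclicCode,
    isCubicTruncation_RR.annihilator_cubicIdeal (pow_dvd_pow _ ha) (pow_dvd_pow _ (by omega))
      (xK_add_one_pow_mul_eq_zero_iff (by omega)) (xK_add_one_pow_mul_eq_zero_iff hhalf)
      (xK_add_one_pow_mul_eq_zero_iff (by omega)), hneg]

lemma cyclicCode_eq_iff (ha : 2 ^ (s - 1) ≤ a) (has : a < 2 ^ s) {z w : KK m s} :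
    cyclicCode a z = cyclicCode a w ↔ (xK m s + 1) ^ (2 ^ s - a) ∣ z - w := by
  have hhalf := two_pow_pred_add_self ha has
  exact isCubicTruncation_RR.cubicIdeal_eq_iff (pow_dvd_pow _ ha) (pow_dvd_pow _ (by omega))
    (xK_add_one_pow_mul_eq_zero_iff (by omega))

lemma le_of_cyclicCode_le (hb : 2 ^ (s - 1) ≤ b) (hbs : b < 2 ^ s) (has : a < 2 ^ s)
    {z w : KK m s} (hle : cyclicCode a z ≤ cyclicCode b w) : b ≤ a := by
  have hhalf := two_pow_pred_add_self hb hbs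
  exact le_of_xK_add_one_pow_dvd has <| isCubicTruncation_RR.dvd_of_cubicIdeal_le
    (pow_dvd_pow _ hb) (pow_dvd_pow _ (by omega)) hle

theorem isSelfDual_cyclicCode_iff (ha : 2 ^ (s - 1) ≤ a) (has : a < 2 ^ s) {z : KK m s} :
    IsSelfDual m s (cyclicCode a z) ↔
      (xK m s + 1) ^ (2 ^ s - a) ∣ z - xK m s ^ a * conjKK m s z := by
  rw [IsSelfDual, dualSet_cyclicCode ha has, SetLike.coe_set_eq, cyclicCode_eq_iff ha has]

end CyclicCode

section Counting

variable {m s a : ℕ}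

lemma aeval_trunc_mk {R A : Type*} [CommRing R] [CommRing A] [Algebra R A] (z : A) (N : ℕ)
    (h : ℕ → R) : aeval z (PowerSeries.trunc N (PowerSeries.mk h)) =
      ∑ j ∈ Finset.range N, algebraMap R A (h j) * z ^ j := by
  simp [aeval_def, PowerSeries.eval₂_trunc_eq_sum_range]

/-- The code with parameter `z = ∑_{j < 2^s-a} h_j (x+1)ʲ`. -/
def cyclicCodeOfSeq (m s a : ℕ) (h : ℕ → Fq m) : Ideal (RR m s) :=
  cyclicCode a (aeval (xK m s + 1) (PowerSeries.trunc (2 ^ s - a) (PowerSeries.mk h)))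

lemma cyclicCodeOfSeq_eq_span (h : ℕ → Fq m) :
    cyclicCodeOfSeq m s a h = Ideal.span
      {(xR m s + 1) ^ a + uR m s ^ 2 * KtoR m s (∑ j ∈ Finset.range (2 ^ s - a),
          algebraMap (Fq m) (KK m s) (h j) * (xK m s + 1) ^ j),
        uR m s * (xR m s + 1) ^ (2 ^ (s - 1)),
        uR m s ^ 2 * (xR m s + 1) ^ (2 ^ s - a)} := by
  rw [cyclicCodeOfSeq, cyclicCode, cubicIdeal, aeval_trunc_mk]
  simp only [map_pow, map_add, map_one, KtoR_xK]

lemma isSelfDual_cyclicCodeOfSeq_iff (ha : 2 ^ (s - 1) ≤ a) (has : a < 2 ^ s) {h : ℕ → Fq m}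
    (hzero : ∀ j, 2 ^ s - a ≤ j → h j = 0) :
    IsSelfDual m s (cyclicCodeOfSeq m s a h) ↔ h ∈ binomialFixed (Fq m) a (2 ^ s - a) := by
  have hhalf := two_pow_pred_add_self ha has
  have hdeg : (PowerSeries.trunc (2 ^ s - a) (PowerSeries.mk h)).natDegree ≤ a :=
    natDegree_le_iff_coeff_eq_zero.2 fun j hj => by
      rw [PowerSeries.coeff_trunc, if_neg (by omega)]
  rw [cyclicCodeOfSeq, isSelfDual_cyclicCode_iff ha has, xK_pow_mul_conjKK_aeval hdeg, ← map_sub,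
    xK_add_one_pow_dvd_aeval_iff (Nat.sub_le _ _)]
  refine (mem_binomialFixed_iff_X_pow_dvd hzero fun j hj => ?_).symm
  rw [PowerSeries.coeff_trunc, if_pos hj, PowerSeries.coeff_mk]

lemma cyclicCodeOfSeq_injOn (ha : 2 ^ (s - 1) ≤ a) (has : a < 2 ^ s) :
    Set.InjOn (cyclicCodeOfSeq m s a) {h | ∀ j, 2 ^ s - a ≤ j → h j = 0} := by
  intro g hg h hh heq
  rw [cyclicCodeOfSeq, cyclicCodeOfSeq, cyclicCode_eq_iff ha has, ← map_sub] at heq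
  have hX := (xK_add_one_pow_dvd_aeval_iff (Nat.sub_le _ _)).1 heq
  ext j
  by_cases hj : j < 2 ^ s - a
  · simpa [PowerSeries.coeff_trunc, hj, sub_eq_zero] using X_pow_dvd_iff.1 hX j hj
  · rw [hg j (not_lt.1 hj), hh j (not_lt.1 hj)]

variable (m s) in
/-- The self-dual codes of the theorem, indexed by the exponent `a` and the solutions `h` of the
binomial system. -/
def selfDualCode :
    (Σ a : Finset.Icc (2 ^ (s - 1)) (2 ^ s - 1), binomialFixed (Fq m) a.1 (2 ^ s - a.1)) →
      Ideal (RR m s) :=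
  fun c => cyclicCodeOfSeq m s c.1 c.2

lemma selfDualCode_injective : Function.Injective (selfDualCode m s) := by
  rintro ⟨⟨a, ha⟩, g, hg⟩ ⟨⟨b, hb⟩, h, hh⟩ heq
  rw [Finset.mem_Icc] at ha hb
  have hpos := Nat.two_pow_pos s
  obtain rfl : a = b := le_antisymm
    (le_of_cyclicCode_le ha.1 (by omega) (by omega) heq.ge)
    (le_of_cyclicCode_le hb.1 (by omega) (by omega) heq.le)
  obtain rfl : g = h := cyclicCodeOfSeq_injOn ha.1 (by omega) hg.1 hh.1 heq
  rfl

lemma range_selfDualCode : Set.range (selfDualCode m s) =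
    {I | IsSelfDual m s I ∧ ∃ a : ℕ, 2 ^ (s - 1) ≤ a ∧ a ≤ 2 ^ s - 1 ∧
      ∃ h : ℕ → Fq m, (∀ j, 2 ^ s - a ≤ j → h j = 0) ∧ I = cyclicCodeOfSeq m s a h} := by
  have hpos := Nat.two_pow_pos s
  ext I
  constructor
  · rintro ⟨⟨⟨a, ha⟩, h, hh⟩, rfl⟩
    rw [Finset.mem_Icc] at ha
    exact ⟨(isSelfDual_cyclicCodeOfSeq_iff ha.1 (by omega) hh.1).2 hh, a, ha.1, ha.2, h, hh.1, rfl⟩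
  · rintro ⟨hI, a, ha, has, h, hzero, rfl⟩
    have hh := (isSelfDual_cyclicCodeOfSeq_iff ha (by omega) hzero).1 hI
    exact ⟨⟨⟨a, Finset.mem_Icc.2 ⟨ha, has⟩⟩, h, hh⟩, rfl⟩

lemma natCeil_natCast_add_one_div_two (n : ℕ) : ⌈((n : ℚ) + 1) / 2⌉₊ = n / 2 + 1 := by
  rw [Nat.ceil_eq_iff (by omega)]
  have hn : (n : ℚ) = 2 * (n / 2 : ℕ) + (n % 2 : ℕ) := by exact_mod_cast (Nat.div_add_mod n 2).symm
  have h2 : (n % 2 : ℕ) ≤ (1 : ℚ) := by exact_mod_cast Nat.lt_succ_iff.1 (Nat.mod_lt n two_pos)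
  constructor <;> push_cast <;> linarith

lemma natCard_binomialFixed_Fq (hm : m ≠ 0) (ha : 2 ^ (s - 1) ≤ a) (has : a ≤ 2 ^ s - 1) :
    Nat.card (binomialFixed (Fq m) a (2 ^ s - a)) =
      (2 ^ m) ^ ⌈((2 ^ s : ℚ) - (a : ℚ) + 1) / 2⌉₊ := by
  have hpos := Nat.two_pow_pos s
  have hhalf := two_pow_pred_add_self ha (by omega)
  obtain ⟨d, hd⟩ : ∃ d, a = 2 ^ s - a + 2 * d := ⟨a - 2 ^ (s - 1), by omega⟩
  have hcard := natCard_binomialFixed (R := Fq m) (N := 2 ^ s - a) d (by omega)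
  rw [← hd, GaloisField.card 2 m hm] at hcard
  rw [hcard, ← natCeil_natCast_add_one_div_two, Nat.cast_sub (by omega), Nat.cast_pow, Nat.cast_two]

end Counting

/-- Counting the self-dual codes of Theorem 4 (`h₁ = 0` case):
for each `2^{s-1} ≤ a ≤ 2^s − 1` there are `(2^m)^{⌈(2^s−a+1)/2⌉}` admissible `h`, and
the total number of such self-dual ideals is `Σ_a (2^m)^{⌈(2^s−a+1)/2⌉}`. -/
theorem stmt9 (m s : ℕ) (hm : 0 < m) (hs : 0 < s) :
    (∀ a : ℕ, 2 ^ (s - 1) ≤ a → a ≤ 2 ^ s - 1 →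
      Nat.card {h : ℕ → Fq m //
          (∀ j, 2 ^ s - a ≤ j → h j = 0) ∧
          ∀ ℓ < 2 ^ s - a,
            h ℓ = ∑ j ∈ Finset.range (ℓ + 1), h j * ((a - j).choose (ℓ - j) : Fq m)} =
        (2 ^ m) ^ (⌈((2 ^ s : ℚ) - (a : ℚ) + 1) / 2⌉₊)) ∧
    Set.ncard {C : Ideal (RR m s) | IsSelfDual m s C ∧
        ∃ a : ℕ, 2 ^ (s - 1) ≤ a ∧ a ≤ 2 ^ s - 1 ∧
        ∃ h : ℕ → Fq m, (∀ j, 2 ^ s - a ≤ j → h j = 0) ∧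
          C = Ideal.span
            {(xR m s + 1) ^ a + uR m s ^ 2 * KtoR m s (∑ j ∈ Finset.range (2 ^ s - a),
                algebraMap (Fq m) (KK m s) (h j) * (xK m s + 1) ^ j),
             uR m s * (xR m s + 1) ^ (2 ^ (s - 1)),
             uR m s ^ 2 * (xR m s + 1) ^ (2 ^ s - a)}} =
      ∑ a ∈ Finset.Icc (2 ^ (s - 1) : ℕ) (2 ^ s - 1),
        (2 ^ m) ^ (⌈((2 ^ s : ℚ) - (a : ℚ) + 1) / 2⌉₊) := by
  refine ⟨fun a ha has => natCard_binomialFixed_Fq hm.ne' ha has, ?_⟩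
  have hcard (a : Finset.Icc (2 ^ (s - 1)) (2 ^ s - 1)) :
      Nat.card (binomialFixed (Fq m) a.1 (2 ^ s - a.1)) =
        (2 ^ m) ^ ⌈((2 ^ s : ℚ) - (a.1 : ℚ) + 1) / 2⌉₊ :=
    natCard_binomialFixed_Fq hm.ne' (Finset.mem_Icc.1 a.2).1 (Finset.mem_Icc.1 a.2).2
  have (a : Finset.Icc (2 ^ (s - 1)) (2 ^ s - 1)) :
      Finite (binomialFixed (Fq m) a.1 (2 ^ s - a.1)) :=
    Nat.finite_of_card_ne_zero (by rw [hcard]; positivity)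
  simp only [← cyclicCodeOfSeq_eq_span]
  rw [← range_selfDualCode, ← Set.image_univ,
    Set.ncard_image_of_injective _ selfDualCode_injective, Set.ncard_univ, Nat.card_sigma,
    Finset.sum_congr rfl fun a _ => hcard a]
  exact Finset.sum_coe_sort _ fun a : ℕ => (2 ^ m) ^ ⌈((2 ^ s : ℚ) - (a : ℚ) + 1) / 2⌉₊
end
end

section
/- Let a ≥ b ≥ 1 be integers with a ≡ b (mod 2), and let T be the b×b matrix over F = GF(2^m) whose (i, j) entry (rows and columns indexed by 0 ≤ i, j ≤ b−1) is the binomial coefficient C(a−j, i−j) reduced into F when i > j, and 0 when i ≤ j. Then the kernel of T (as a linear map F^b → F^b) has dimension ⌈(b+1)/2⌉. -/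
noncomputable section

open Polynomial

/-!
The unitriangular matrix `B = T + 1` is the matrix of the substitution `y ↦ x + y` on binary forms
of degree `a`, written in the basis `xʲ yᵃ⁻ʲ` and truncated to its first `b` coefficients. In
characteristic two this substitution is an involution, hence `T² = B² + 1 = 0`, so that
`2 rank T ≤ b`. If `a = 2c`, then the form `(y (x + y))ᶜ` is invariant, so its coefficient vector
lies in `ker T`; its coefficient at `yᵃ` is `1`, whereas the first row of `T` is zero, so it is not
in the range of `T` and `2 rank T < b`. These bounds are sharp: the entry `a - j` of `T` just below
the diagonal in column `j` is `1` if `a - j` is odd, and the columns `j` with this property,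
paired with the rows `j + 1`, cut out a unitriangular submatrix.
-/

open scoped Matrix

section Rank

variable {m n k R K : Type*}

lemma card_le_rank_of_isLowerTriangular_submatrix [Fintype n] [Fintype k] [LinearOrder k]
    [CommRing R] [Nontrivial R] (A : Matrix m n R) (r : k → m) (c : k → n)
    (htri : (A.submatrix r c).IsLowerTriangular) (hdiag : ∀ i, IsUnit (A (r i) (c i))) :
    Fintype.card k ≤ A.rank := by
  have hdet : IsUnit (A.submatrix r c).det := by
    rw [Matrix.det_of_isLowerTriangular _ htri]
    exact IsUnit.prod_univ_iff.2 hdiag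
  rw [← Matrix.rank_of_isUnit _ ((Matrix.isUnit_iff_isUnit_det _).2 hdet)]
  exact Matrix.rank_submatrix_le A r c

variable [Fintype n] [Field K]

lemma rank_add_finrank_ker_mulVecLin (A : Matrix m n K) :
    A.rank + Module.finrank K (LinearMap.ker A.mulVecLin) = Fintype.card n := by
  rw [Matrix.rank, LinearMap.finrank_range_add_finrank_ker, Module.finrank_fintype_fun_eq_card]

variable {A : Matrix n n K}

lemma two_mul_rank_le_of_mul_self_eq_zero (hA : A * A = 0) : 2 * A.rank ≤ Fintype.card n := by
  rw [two_mul]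
  exact Matrix.rank_add_rank_le_card_of_mul_eq_zero hA

lemma two_mul_rank_lt_of_mul_self_eq_zero (hA : A * A = 0) {v : n → K} (hker : A *ᵥ v = 0)
    (hrange : v ∉ LinearMap.range A.mulVecLin) : 2 * A.rank < Fintype.card n := by
  have hle : LinearMap.range A.mulVecLin ≤ LinearMap.ker A.mulVecLin := by
    rw [LinearMap.range_le_ker_iff, ← Matrix.mulVecLin_mul, hA, Matrix.mulVecLin_zero]
  have hlt : LinearMap.range A.mulVecLin < LinearMap.ker A.mulVecLin :=
    lt_of_le_of_ne hle fun heq ↦ hrange (heq ▸ hker)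
  have hrank : A.rank < Module.finrank K (LinearMap.ker A.mulVecLin) :=
    Submodule.finrank_lt_finrank_of_lt hlt
  have := rank_add_finrank_ker_mulVecLin A
  omega

end Rank

/-- The coefficients of a polynomial below degree `b`. A polynomial `p` stands for the binary form
`∑ pₖ xᵏ yᵃ⁻ᵏ` of degree `a`, of which this is the truncated coefficient vector. -/
def coeffVec (R : Type*) [Semiring R] (b : ℕ) : R[X] →ₗ[R] Fin b → R :=
  LinearMap.pi fun i ↦ lcoeff R i

@[simp]
lemma coeffVec_apply {R : Type*} [Semiring R] {b : ℕ} (p : R[X]) (i : Fin b) :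
    coeffVec R b p i = p.coeff i :=
  rfl

lemma coeffVec_X_pow {R : Type*} [Semiring R] {b : ℕ} (j : Fin b) :
    coeffVec R b (X ^ (j : ℕ)) = Pi.single j 1 := by
  ext i
  simp [coeff_X_pow, Pi.single_apply, Fin.ext_iff]

/-- The matrix of the substitution `y ↦ x + y` on binary forms of degree `a`, truncated to the
first `b ≤ a + 1` coefficients. The case distinction is needed because `i - j` is truncated. -/
def binomialMatrix (R : Type*) [Semiring R] (a b : ℕ) : Matrix (Fin b) (Fin b) R :=
  Matrix.of fun i j ↦ if (j : ℕ) ≤ i then ((a - j : ℕ).choose (i - j) : R) else 0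

/-- The strictly lower triangular part of `binomialMatrix R a b`; in characteristic two this is the
matrix `T(a + b, b)` of the theorem. -/
def strictBinomialMatrix (R : Type*) [Semiring R] (a b : ℕ) : Matrix (Fin b) (Fin b) R :=
  Matrix.of fun i j ↦ if (j : ℕ) < i then ((a - j : ℕ).choose (i - j) : R) else 0

section Semiring

variable {R : Type*} [Semiring R] {a b : ℕ}

lemma strictBinomialMatrix_add_one : strictBinomialMatrix R a b + 1 = binomialMatrix R a b := by
  ext i j
  rcases lt_trichotomy i j with h | rfl | h
  · simp [strictBinomialMatrix, binomialMatrix, h.ne, h.not_gt, h.not_ge]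
  · simp [strictBinomialMatrix, binomialMatrix]
  · simp [strictBinomialMatrix, binomialMatrix, h, h.le, h.ne']

lemma strictBinomialMatrix_mulVec_zero (hb : 0 < b) (v : Fin b → R) :
    (strictBinomialMatrix R a b *ᵥ v) ⟨0, hb⟩ = 0 := by
  rw [Matrix.mulVec, dotProduct]
  refine Finset.sum_eq_zero fun j _ ↦ ?_
  rw [strictBinomialMatrix, Matrix.of_apply, if_neg (Nat.not_lt_zero _), zero_mul]

end Semiring

lemma binomialMatrix_mulVec_coeffVec_X_pow {R : Type*} [CommSemiring R] (a b k : ℕ) :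
    binomialMatrix R a b *ᵥ coeffVec R b (X ^ k) = coeffVec R b (X ^ k * (1 + X) ^ (a - k)) := by
  ext i
  rw [coeffVec_apply, coeff_X_pow_mul', coeff_one_add_X_pow]
  by_cases hk : k < b
  · lift k to Fin b using hk
    rw [coeffVec_X_pow, Matrix.mulVec_single_one]
    rfl
  · have hX : coeffVec R b (X ^ k) = 0 := by
      ext j
      simp [coeff_X_pow, (j.2.trans_le (not_lt.1 hk)).ne]
    rw [hX, Matrix.mulVec_zero, if_neg (by omega), Pi.zero_apply]

section CharTwo

variable {R : Type*} [CommRing R] [CharP R 2] {a b : ℕ}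

-- In terms of forms: `y ↦ x + y` maps `xʲ yᵉ (x + y)ᵈ` to `xʲ (x + y)ᵉ yᵈ`, as `x + (x + y) = y`.
lemma binomialMatrix_mulVec_coeffVec_X_pow_mul_one_add_X_pow {j d e : ℕ} (h : j + d + e = a) :
    binomialMatrix R a b *ᵥ coeffVec R b (X ^ j * (1 + X) ^ d) =
      coeffVec R b (X ^ j * (1 + X) ^ e) := by
  have hone : (X + (1 + X) : R[X]) = 1 := by
    rw [add_left_comm, CharTwo.add_self_eq_zero, add_zero]
  have hsource : (X ^ j * (1 + X) ^ d : R[X]) =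
      ∑ l ∈ Finset.range (d + 1), d.choose l • X ^ (j + l) := by
    rw [add_comm 1 X, add_pow, Finset.mul_sum]
    refine Finset.sum_congr rfl fun l _ ↦ ?_
    rw [nsmul_eq_mul]
    ring
  have htarget : (X ^ j * (1 + X) ^ e : R[X]) =
      ∑ l ∈ Finset.range (d + 1), d.choose l • (X ^ (j + l) * (1 + X) ^ (a - (j + l))) := by
    calc (X ^ j * (1 + X) ^ e : R[X]) = X ^ j * (1 + X) ^ e * (X + (1 + X)) ^ d := by
          rw [hone, one_pow, mul_one]
      _ = _ := by
          rw [add_pow X, Finset.mul_sum]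
          refine Finset.sum_congr rfl fun l hl ↦ ?_
          have hexp : a - (j + l) = e + (d - l) := by
            have := Finset.mem_range.1 hl
            omega
          rw [nsmul_eq_mul, hexp]
          ring
  simp only [hsource, htarget, map_sum, map_nsmul, Matrix.mulVec_sum, Matrix.mulVec_smul,
    binomialMatrix_mulVec_coeffVec_X_pow]

lemma binomialMatrix_mul_self (hab : b ≤ a + 1) :
    binomialMatrix R a b * binomialMatrix R a b = 1 := by
  refine Matrix.ext_of_mulVec_single fun j ↦ ?_
  have hexp : (j : ℕ) + (a - j) + 0 = a := by omega
  rw [← Matrix.mulVec_mulVec, ← coeffVec_X_pow, binomialMatrix_mulVec_coeffVec_X_pow,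
    binomialMatrix_mulVec_coeffVec_X_pow_mul_one_add_X_pow hexp, pow_zero, mul_one,
    Matrix.one_mulVec]

lemma strictBinomialMatrix_mul_self (hab : b ≤ a + 1) :
    strictBinomialMatrix R a b * strictBinomialMatrix R a b = 0 := by
  set T := strictBinomialMatrix R a b
  have hdouble : T + T = 0 := Matrix.ext fun _ _ ↦ CharTwo.add_self_eq_zero _
  have hinv : (T + 1) * (T + 1) = 1 := by
    rw [strictBinomialMatrix_add_one, binomialMatrix_mul_self hab]
  calc T * T = (T + 1) * (T + 1) - (T + T) - 1 := by noncomm_ring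
    _ = 0 := by rw [hinv, hdouble, sub_zero, sub_self]

lemma strictBinomialMatrix_mulVec_coeffVec_one_add_X_pow (c : ℕ) :
    strictBinomialMatrix R (2 * c) b *ᵥ coeffVec R b ((1 + X) ^ c) = 0 := by
  have hfix : binomialMatrix R (2 * c) b *ᵥ coeffVec R b ((1 + X) ^ c) =
      coeffVec R b ((1 + X) ^ c) := by
    have hexp : 0 + c + c = 2 * c := by ring
    simpa only [pow_zero, one_mul] using
      binomialMatrix_mulVec_coeffVec_X_pow_mul_one_add_X_pow (R := R) (b := b) hexp
  rwa [← strictBinomialMatrix_add_one, Matrix.add_mulVec, Matrix.one_mulVec,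
    add_eq_right] at hfix

lemma le_rank_strictBinomialMatrix (hab : b ≤ a + 1) :
    (b + a % 2 - 1) / 2 ≤ (strictBinomialMatrix R a b).rank := by
  have : Nontrivial R := CharP.nontrivial_of_char_ne_one (v := 2) (by norm_num)
  let col (t : Fin ((b + a % 2 - 1) / 2)) : Fin b := ⟨2 * t + (a + 1) % 2, by omega⟩
  let row (t : Fin ((b + a % 2 - 1) / 2)) : Fin b := ⟨2 * t + (a + 1) % 2 + 1, by omega⟩
  rw [← Fintype.card_fin ((b + a % 2 - 1) / 2)]
  refine card_le_rank_of_isLowerTriangular_submatrix _ row col (fun s t hst ↦ ?_) fun t ↦ ?_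
  · have hlt : (s : ℕ) < t := hst
    have hrc : ¬ (col t : ℕ) < row s := by
      simp only [row, col]
      omega
    exact if_neg hrc
  · have hodd : ¬ Even (a - (2 * t + (a + 1) % 2) : ℕ) := by
      rw [Nat.even_iff]
      omega
    simp [strictBinomialMatrix, row, col, CharTwo.natCast_eq_ite, hodd]

end CharTwo

section Field

variable {K : Type*} [Field K] [CharP K 2] {a b : ℕ}

lemma two_mul_rank_strictBinomialMatrix_lt_of_even (ha : Even a) (hb : 0 < b) (hab : b ≤ a + 1) :
    2 * (strictBinomialMatrix K a b).rank < b := by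
  obtain ⟨c, rfl⟩ := ha.exists_two_nsmul
  rw [smul_eq_mul] at hab ⊢
  refine (two_mul_rank_lt_of_mul_self_eq_zero (strictBinomialMatrix_mul_self hab)
    (strictBinomialMatrix_mulVec_coeffVec_one_add_X_pow c) ?_).trans_eq (Fintype.card_fin b)
  rintro ⟨w, hw⟩
  have hzero : (strictBinomialMatrix K (2 * c) b *ᵥ w) ⟨0, hb⟩ = 1 := by
    rw [← Matrix.mulVecLin_apply, hw, coeffVec_apply, coeff_one_add_X_pow, Nat.choose_zero_right,
      Nat.cast_one]
  exact zero_ne_one ((strictBinomialMatrix_mulVec_zero hb w).symm.trans hzero)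

lemma rank_strictBinomialMatrix (hb : 0 < b) (hab : b ≤ a + 1) :
    (strictBinomialMatrix K a b).rank = (b + a % 2 - 1) / 2 := by
  have hlower := le_rank_strictBinomialMatrix (R := K) hab
  rcases Nat.even_or_odd a with ha | ha
  · have hupper := two_mul_rank_strictBinomialMatrix_lt_of_even (K := K) ha hb hab
    rw [Nat.even_iff] at ha
    omega
  · have hupper := two_mul_rank_le_of_mul_self_eq_zero
      (strictBinomialMatrix_mul_self (R := K) hab)
    rw [Fintype.card_fin] at hupper
    rw [Nat.odd_iff] at ha
    omega

end Field

lemma natCeil_add_one_div_two (b : ℕ) : ⌈((b : ℚ) + 1) / 2⌉₊ = b / 2 + 1 := by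
  have hlower : (2 * (b / 2 : ℕ) : ℚ) ≤ b := by exact_mod_cast Nat.mul_div_le b 2
  have hupper : (b : ℚ) ≤ 2 * (b / 2 : ℕ) + 1 := by
    exact_mod_cast (by omega : b ≤ 2 * (b / 2) + 1)
  rw [Nat.ceil_eq_iff (b / 2).succ_ne_zero, Nat.succ_sub_one]
  push_cast
  constructor <;> linarith

theorem stmt13_general (K : Type*) [Field K] [CharP K 2] {a b : ℕ} (hb : 0 < b)
    (hab : b ≤ a + 1) :
    Module.finrank K (LinearMap.ker (strictBinomialMatrix K a b).mulVecLin) =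
      (b + 2 - a % 2) / 2 := by
  have hdim := rank_add_finrank_ker_mulVecLin (strictBinomialMatrix K a b)
  rw [rank_strictBinomialMatrix hb hab, Fintype.card_fin] at hdim
  omega

/-- For `a ≥ b ≥ 1` with `a ≡ b (mod 2)`, the strictly lower-triangular
binomial matrix `T` (char-2 specialization of `T(a+b,b)`) has kernel of dimension
`⌈(b+1)/2⌉` over `F = GF(2^m)`. -/
theorem stmt13 (m : ℕ) (hm : 0 < m) (a b : ℕ) (hb : 1 ≤ b) (hab : b ≤ a)
    (hpar : a % 2 = b % 2)
    (T : Matrix (Fin b) (Fin b) (Fq m))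
    (hT : ∀ i j : Fin b, T i j =
      if (j : ℕ) < (i : ℕ) then (((a - (j : ℕ)).choose ((i : ℕ) - (j : ℕ)) : ℕ) : Fq m)
      else 0) :
    Module.finrank (Fq m) (LinearMap.ker T.mulVecLin) = ⌈((b : ℚ) + 1) / 2⌉₊ := by
  obtain rfl : T = strictBinomialMatrix (Fq m) a b := Matrix.ext hT
  rw [stmt13_general (Fq m) hb (by omega), natCeil_add_one_div_two]
  omega
end
end

section
/- Let a ≥ b ≥ 2 be integers with a ≡ b (mod 2). Let T be the b×b matrix over F = GF(2^m) with (i, j) entry C(a−j, i−j) reduced into F for i > j and 0 for i ≤ j (indices 0 ≤ i, j ≤ b−1), and let T′ be the (b−1)×(b−1) matrix with (i, j) entry C(a−1−j, i−j) reduced into F for i > j and 0 for i ≤ j (indices 0 ≤ i, j ≤ b−2). Fix y₁, …, y_{b−1} ∈ F and set y = (0, y₁, …, y_{b−1})ᵗ and y′ = (y₁, …, y_{b−1})ᵗ. Then the number of vectors x = (x₀, …, x_{b−1}) ∈ F^b with x₀ ≠ 0 and T x = y equals (2^m)^{⌈(b+1)/2⌉}·δ − (2^m)^{⌈b/2⌉}·δ′,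 where δ = 1 if the system T x = y has at least one solution and δ = 0 otherwise, and δ′ = 1 if the system T′ x′ = y′ has at least one solution and δ′ = 0 otherwise. -/
noncomputable section

open Polynomial

open scoped Classical

/-!
Adding the identity to `T` gives the matrix of `f ↦ (1 + X) ^ a * f (X / (1 + X))` on polynomials
modulo `X ^ b`, so the kernel of `T` consists of the fixed points of this substitution. When
`a = 2n` and the characteristic is two, `(1 + X) ^ n` is such a fixed point, with constant
coefficient `1`. Moreover the solutions of `T x = y` with `x₀ = 0` are those of `T' x' = y'`,
padded by a zero. Hence passing from `T'` to `T` multiplies the size of the kernel by that of the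
ring if `a` is even; if `a` is odd it leaves the size unchanged, as row `1` of `T x = 0` reads
`a x₀ = 0`. By induction the kernel of `T` has `(#R) ^ (b / 2 + 1)` elements, and each of the two
solution sets is empty or a coset of the corresponding kernel.
-/

theorem natCeil_natCast_div_two {K : Type*} [Field K] [LinearOrder K] [IsStrictOrderedRing K]
    [FloorSemiring K] (n : ℕ) : ⌈(n : K) / 2⌉₊ = (n + 1) / 2 := by
  refine eq_of_forall_ge_iff fun k => ?_
  rw [Nat.ceil_le, div_le_iff₀ two_pos]
  norm_cast
  lia

section Counting

open Matrix

variable {R ι κ : Type*} [Fintype κ]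

theorem natCard_and_add_natCard_not_and {α : Type*} [Finite α] (p q : α → Prop) :
    Nat.card {x // p x ∧ q x} + Nat.card {x // ¬p x ∧ q x} = Nat.card {x // q x} := by
  rw [← Nat.card_sum, ← Nat.card_congr (Equiv.sumCompl fun x : {x // q x} => p x)]
  refine Nat.card_congr (Equiv.sumCongr ?_ ?_)
  · exact (Equiv.subtypeEquivRight fun _ => and_comm).trans
      (Equiv.subtypeSubtypeEquivSubtypeInter q p).symm
  · exact (Equiv.subtypeEquivRight fun _ => and_comm).trans
      (Equiv.subtypeSubtypeEquivSubtypeInter q fun x => ¬p x).symm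

theorem natCard_apply_zero_eq_zero_and [Zero R] {n : ℕ} (p : (Fin (n + 1) → R) → Prop) :
    Nat.card {x : Fin (n + 1) → R // x 0 = 0 ∧ p x} =
      Nat.card {x : Fin n → R // p (Fin.cons 0 x)} := by
  have cons_tail {x : Fin (n + 1) → R} (hx : x 0 = 0) : Fin.cons 0 (Fin.tail x) = x := by
    rw [← hx, Fin.cons_self_tail]
  exact Nat.card_congr
    { toFun x := ⟨Fin.tail x.1, by rw [cons_tail x.2.1]; exact x.2.2⟩
      invFun x := ⟨Fin.cons 0 x.1, Fin.cons_zero .., x.2⟩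
      left_inv x := Subtype.ext (cons_tail x.2.1)
      right_inv x := Subtype.ext (Fin.tail_cons (α := fun _ => R) 0 x.1) }

theorem natCard_mulVec_eq [NonUnitalNonAssocRing R] (A : Matrix ι κ R) (y : ι → R)
    [Decidable (∃ x, A *ᵥ x = y)] :
    Nat.card {x // A *ᵥ x = y} =
      Nat.card {x // A *ᵥ x = 0} * if ∃ x, A *ᵥ x = y then 1 else 0 := by
  split_ifs with h
  · obtain ⟨z, hz⟩ := h
    rw [mul_one]
    exact Nat.card_congr ((Equiv.subRight z).subtypeEquiv fun x => by
      simp [mulVec_sub, hz, sub_eq_zero])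
  · have : IsEmpty {x // A *ᵥ x = y} := ⟨fun x => h ⟨x.1, x.2⟩⟩
    simp

theorem natCard_mulVec_eq_zero_of_apply_eq_one [CommRing R] (A : Matrix ι κ R) {v : κ → R}
    (hAv : A *ᵥ v = 0) {k : κ} (hvk : v k = 1) :
    Nat.card {x // A *ᵥ x = 0} = Nat.card R * Nat.card {x // x k = 0 ∧ A *ᵥ x = 0} := by
  rw [← Nat.card_prod]
  exact Nat.card_congr
    { toFun x := (x.1 k, ⟨x.1 - x.1 k • v, by simp [hvk],
        by rw [mulVec_sub, mulVec_smul, hAv, x.2, smul_zero, sub_zero]⟩)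
      invFun p := ⟨p.2.1 + p.1 • v,
        by rw [mulVec_add, mulVec_smul, hAv, p.2.2.2, smul_zero, add_zero]⟩
      left_inv x := Subtype.ext (sub_add_cancel ..)
      right_inv := by
        rintro ⟨c, x, hx, -⟩
        ext <;> simp [hx, hvk] }

end Counting

section Binomial

open Finset

variable {R : Type*} [CommRing R] [CharP R 2]

theorem sum_choose_mul_pow_mul_one_add_pow (x : R) (n : ℕ) :
    ∑ t ∈ range (n + 1), (n.choose t : R) * (x ^ t * (1 + x) ^ (2 * n - t)) = (1 + x) ^ n := by
  have x_add_one_add_x : x + (1 + x) = 1 := by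
    rw [add_left_comm, CharTwo.add_self_eq_zero, add_zero]
  calc
    _ = (1 + x) ^ n * ∑ t ∈ range (n + 1), x ^ t * (1 + x) ^ (n - t) * (n.choose t : R) := by
      rw [mul_sum]
      refine sum_congr rfl fun t ht => ?_
      have ht : t ≤ n := mem_range_succ_iff.mp ht
      rw [show 2 * n - t = n + (n - t) by lia, pow_add]
      ring
    _ = (1 + x) ^ n := by rw [← add_pow, x_add_one_add_x, one_pow, mul_one]

theorem sum_choose_mul_choose_eq_choose (n r : ℕ) :
    ∑ t ∈ range (r + 1), (n.choose t : R) * ((2 * n - t).choose (r - t) : R) = n.choose r := by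
  have coeff_r := congrArg (coeff · r) (sum_choose_mul_pow_mul_one_add_pow (X : R[X]) n)
  simp only [finsetSum_coeff, coeff_natCast_mul, coeff_X_pow_mul', coeff_one_add_X_pow] at coeff_r
  rw [← coeff_r]
  refine sum_congr_of_eq_on_inter (fun t _ ht => ?_) (fun t _ ht => ?_) fun t ht _ => ?_
  · rw [Nat.choose_eq_zero_of_lt (by simpa using ht), Nat.cast_zero, zero_mul]
  · rw [if_neg (by simpa using ht), mul_zero]
  · rw [if_pos (mem_range_succ_iff.mp ht)]

end Binomial

section StrictPascal

open Matrix

variable {R : Type*} {a b n : ℕ}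

section Semiring

variable [Semiring R]

variable (R) in
/-- The strictly lower triangular matrix of binomial coefficients `C(a - j, i - j)` of size `b`.
This is the matrix `T` of the problem; `T'` is the one with parameters `a - 1` and `b - 1`. -/
def strictPascal (a b : ℕ) : Matrix (Fin b) (Fin b) R :=
  of fun i j => if (j : ℕ) < i then ((a - j).choose (i - j) : R) else 0

theorem strictPascal_mulVec_cons_zero (x : Fin b → R) :
    strictPascal R a (b + 1) *ᵥ Fin.cons 0 x = Fin.cons 0 (strictPascal R (a - 1) b *ᵥ x) := by
  ext i
  cases i using Fin.cases <;>
    simp [strictPascal, mulVec, dotProduct, Fin.sum_univ_succ, Nat.sub_sub, add_comm 1]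

theorem strictPascal_mulVec_apply_one (x : Fin (b + 2) → R) :
    (strictPascal R a (b + 2) *ᵥ x) 1 = a * x 0 := by
  simp [strictPascal, mulVec, dotProduct]

theorem natCard_apply_zero_eq_zero_and_strictPascal_mulVec_eq_cons (y : Fin b → R) :
    Nat.card {x // x 0 = 0 ∧ strictPascal R a (b + 1) *ᵥ x = Fin.cons 0 y} =
      Nat.card {x // strictPascal R (a - 1) b *ᵥ x = y} := by
  rw [natCard_apply_zero_eq_zero_and]
  simp only [strictPascal_mulVec_cons_zero, Fin.cons_right_injective _ |>.eq_iff]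

theorem natCard_apply_zero_eq_zero_and_strictPascal_mulVec_eq_zero :
    Nat.card {x // x 0 = 0 ∧ strictPascal R a (b + 1) *ᵥ x = 0} =
      Nat.card {x // strictPascal R (a - 1) b *ᵥ x = 0} := by
  rw [← cons_zero_zero]
  exact natCard_apply_zero_eq_zero_and_strictPascal_mulVec_eq_cons 0

end Semiring

variable [CommRing R] [CharP R 2]

theorem strictPascal_two_mul_mulVec_choose :
    strictPascal R (2 * n) b *ᵥ (fun j => (n.choose j : R)) = 0 := by
  ext i
  let summand (j : ℕ) : R := n.choose j * (2 * n - j).choose (i - j)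
  have sum_summand : ∑ j ∈ Finset.range i, summand j = 0 := by
    simpa [Finset.sum_range_succ, summand] using sum_choose_mul_choose_eq_choose (R := R) n i
  calc
    _ = ∑ j : Fin b, if (j : ℕ) < i then summand j else 0 := by
      simp [strictPascal, mulVec, dotProduct, summand, mul_comm]
    _ = ∑ j ∈ Finset.range b with j < (i : ℕ), summand j := by
      rw [Fin.sum_univ_eq_sum_range (fun j => if j < (i : ℕ) then summand j else 0),
        Finset.sum_filter]
    _ = 0 := by
      rw [← sum_summand]
      congr 1
      grind

theorem natCard_strictPascal_mulVec_eq_zero_of_even (ha : Even a) :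
    Nat.card {x // strictPascal R a (b + 1) *ᵥ x = 0} =
      Nat.card R * Nat.card {x // strictPascal R (a - 1) b *ᵥ x = 0} := by
  obtain ⟨n, rfl⟩ := ha.exists_two_nsmul
  rw [← natCard_apply_zero_eq_zero_and_strictPascal_mulVec_eq_zero]
  exact natCard_mulVec_eq_zero_of_apply_eq_one _ strictPascal_two_mul_mulVec_choose (by simp)

theorem natCard_strictPascal_mulVec_eq_zero_of_odd (ha : Odd a) :
    Nat.card {x // strictPascal R a (b + 2) *ᵥ x = 0} =
      Nat.card {x // strictPascal R (a - 1) (b + 1) *ᵥ x = 0} := by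
  have head_eq_zero {x : Fin (b + 2) → R} (hx : strictPascal R a (b + 2) *ᵥ x = 0) : x 0 = 0 := by
    have row_one := strictPascal_mulVec_apply_one (a := a) x
    rwa [hx, CharTwo.natCast_eq_ite, if_neg (Nat.not_even_iff_odd.mpr ha), one_mul,
      Pi.zero_apply, eq_comm] at row_one
  rw [← natCard_apply_zero_eq_zero_and_strictPascal_mulVec_eq_zero]
  exact Nat.card_congr (Equiv.subtypeEquivRight fun x => (and_iff_right_of_imp head_eq_zero).symm)

theorem natCard_strictPascal_mulVec_eq_zero (hb : 1 ≤ b) (hab : b ≤ a) (hpar : a % 2 = b % 2) :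
    Nat.card {x // strictPascal R a b *ᵥ x = 0} = Nat.card R ^ (b / 2 + 1) := by
  induction b, hb using Nat.le_induction generalizing a with
  | base =>
    have mulVec_eq_zero (x : Fin 1 → R) : strictPascal R a 1 *ᵥ x = 0 := by
      ext i
      simp [strictPascal, mulVec, dotProduct]
    simp [mulVec_eq_zero, Nat.card_fun]
  | succ b hb ih =>
    have ih := ih (a := a - 1) (by lia) (by lia)
    rcases Nat.even_or_odd a with ha | ha
    · rw [natCard_strictPascal_mulVec_eq_zero_of_even ha, ih, ← pow_succ']
      congr 1
      grind
    · obtain ⟨b, rfl⟩ := Nat.exists_eq_add_of_le' hb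
      rw [natCard_strictPascal_mulVec_eq_zero_of_odd ha, ih]
      congr 1
      grind

theorem natCard_strictPascal_mulVec_eq (hb : 1 ≤ b) (hab : b ≤ a) (hpar : a % 2 = b % 2)
    (y : Fin b → R) [Decidable (∃ x, strictPascal R a b *ᵥ x = y)] :
    Nat.card {x // strictPascal R a b *ᵥ x = y} =
      Nat.card R ^ (b / 2 + 1) * if ∃ x, strictPascal R a b *ᵥ x = y then 1 else 0 := by
  rw [natCard_mulVec_eq, natCard_strictPascal_mulVec_eq_zero hb hab hpar]

end StrictPascal

theorem stmt14_general {R : Type*} [CommRing R] [Finite R] [CharP R 2]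
    (a b : ℕ) (hb : 2 ≤ b) (hab : b ≤ a) (hpar : a % 2 = b % 2)
    (T : Matrix (Fin b) (Fin b) R)
    (hT : ∀ i j : Fin b, T i j =
      if (j : ℕ) < (i : ℕ) then (((a - (j : ℕ)).choose ((i : ℕ) - (j : ℕ)) : ℕ) : R) else 0)
    (T' : Matrix (Fin (b - 1)) (Fin (b - 1)) R)
    (hT' : ∀ i j : Fin (b - 1), T' i j =
      if (j : ℕ) < (i : ℕ) then (((a - 1 - (j : ℕ)).choose ((i : ℕ) - (j : ℕ)) : ℕ) : R) else 0)
    (y : Fin b → R) (hy0 : y ⟨0, by omega⟩ = 0)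
    (y' : Fin (b - 1) → R)
    (hy' : ∀ i : Fin (b - 1), y' i = y ⟨(i : ℕ) + 1, by have := i.isLt; omega⟩) :
    (Nat.card {x : Fin b → R // x ⟨0, by omega⟩ ≠ 0 ∧ T.mulVec x = y} : ℤ) =
      (Nat.card R : ℤ) ^ ⌈((b : ℚ) + 1) / 2⌉₊ * (if ∃ x, T.mulVec x = y then 1 else 0) -
      (Nat.card R : ℤ) ^ ⌈(b : ℚ) / 2⌉₊ * (if ∃ x', T'.mulVec x' = y' then 1 else 0) := by
  obtain ⟨b, rfl⟩ := Nat.exists_eq_add_of_le' (one_le_two.trans hb)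
  obtain rfl : T = strictPascal R a (b + 1) := Matrix.ext hT
  obtain rfl : T' = strictPascal R (a - 1) b := Matrix.ext hT'
  obtain rfl : y = Fin.cons 0 y' := by
    ext i
    cases i using Fin.cases with
    | zero => exact hy0
    | succ i => exact (hy' i).symm
  have split := natCard_and_add_natCard_not_and (fun x : Fin (b + 1) → R => x 0 = 0)
    fun x => (strictPascal R a (b + 1)).mulVec x = Fin.cons 0 y'
  rw [natCard_apply_zero_eq_zero_and_strictPascal_mulVec_eq_cons,
    natCard_strictPascal_mulVec_eq (by lia) (by lia) (by lia),
    natCard_strictPascal_mulVec_eq (by lia) hab hpar] at split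
  have ceil_b : ⌈((b + 1 : ℕ) : ℚ) / 2⌉₊ = b / 2 + 1 := by
    rw [natCeil_natCast_div_two]
    lia
  have ceil_b_succ : ⌈(((b + 1 : ℕ) : ℚ) + 1) / 2⌉₊ = (b + 1) / 2 + 1 := by
    rw [← Nat.cast_add_one, natCeil_natCast_div_two]
    lia
  rw [ceil_b, ceil_b_succ, eq_sub_iff_add_eq']
  exact_mod_cast split

/-- Counting solutions of `T x = y` with `x₀ ≠ 0`, where `y₀ = 0`. -/
theorem stmt14 (m : ℕ) (hm : 0 < m) (a b : ℕ) (hb : 2 ≤ b) (hab : b ≤ a)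
    (hpar : a % 2 = b % 2)
    (T : Matrix (Fin b) (Fin b) (Fq m))
    (hT : ∀ i j : Fin b, T i j =
      if (j : ℕ) < (i : ℕ) then (((a - (j : ℕ)).choose ((i : ℕ) - (j : ℕ)) : ℕ) : Fq m)
      else 0)
    (T' : Matrix (Fin (b - 1)) (Fin (b - 1)) (Fq m))
    (hT' : ∀ i j : Fin (b - 1), T' i j =
      if (j : ℕ) < (i : ℕ) then (((a - 1 - (j : ℕ)).choose ((i : ℕ) - (j : ℕ)) : ℕ) : Fq m)
      else 0)
    (y : Fin b → Fq m) (hy0 : y ⟨0, by omega⟩ = 0)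
    (y' : Fin (b - 1) → Fq m)
    (hy' : ∀ i : Fin (b - 1), y' i = y ⟨(i : ℕ) + 1, by have := i.isLt; omega⟩) :
    (Nat.card {x : Fin b → Fq m // x ⟨0, by omega⟩ ≠ 0 ∧ T.mulVec x = y} : ℤ) =
      (2 ^ m : ℤ) ^ (⌈((b : ℚ) + 1) / 2⌉₊) * (if ∃ x, T.mulVec x = y then 1 else 0) -
      (2 ^ m : ℤ) ^ (⌈(b : ℚ) / 2⌉₊) * (if ∃ x', T'.mulVec x' = y' then 1 else 0) := by
  simpa only [GaloisField.card 2 m hm.ne', Nat.cast_pow, Nat.cast_ofNat] using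
    stmt14_general a b hb hab hpar T hT T' hT' y hy0 y' hy'
end
end
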